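/- arXiv:2105.09565 — 4 statements merged into one kernel-verified Lean document; each statement's English description precedes it below -/
import Mathlib

section
/- (Hypercontractive inequality, Rademacher case.) Let f be a Rademacher random multiplicative function, let (a_n)_{n ≥ 1} be a finitely supported sequence of complex numbers, and let m ≥ 1 be an integer. Then E[|∑_{n ≥ 1} a_n f(n)|^{2m}] ≤ (∑_{n ≥ 1} |a_n|² d_{2m−1}(n))^m. -/
open MeasureTheory ProbabilityTheory

noncomputable section

/-- The `k`-fold divisor function: the number of ways of writing `n` as an ordered
product of `k` positive integers. -/
def dFold (k n : ℕ) : ℕ := Nat.card {v : Fin k → ℕ // ∏ i, v i = n}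

/-- A Rademacher random multiplicative function. -/
structure IsRademacherRMF {Ω : Type*} [MeasurableSpace Ω] (μ : Measure Ω)
    (f : Ω → ℕ → ℝ) : Prop where
  meas : ∀ n : ℕ, Measurable fun ω => f ω n
  indep : iIndepFun (m := fun _ : Nat.Primes => (inferInstance : MeasurableSpace ℝ))
    (fun (p : Nat.Primes) (ω : Ω) => f ω (p : ℕ)) μ
  prob_one : ∀ p : ℕ, p.Prime → μ {ω | f ω p = 1} = 1 / 2
  prob_neg_one : ∀ p : ℕ, p.Prime → μ {ω | f ω p = -1} = 1 / 2
  eq_zero_of_not_squarefree : ∀ (ω : Ω) (n : ℕ), ¬Squarefree n → f ω n = 0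
  eq_prod_of_squarefree : ∀ (ω : Ω) (n : ℕ), Squarefree n →
    f ω n = ∏ p ∈ n.primeFactors, f ω p

/-!
Write `q = 2 * m - 1`. For vectors of a real inner product space, the two-point inequality
`‖g + h‖ ^ (2 * m) + ‖g - h‖ ^ (2 * m) ≤ 2 * (‖g‖ ^ 2 + q * ‖h‖ ^ 2) ^ m`
follows by comparing binomial coefficients. Applied to one variable at a time, it bounds the
`2 * m`-th moment of a multilinear polynomial `∑ S, (∏ i ∈ S, X i) • b S` in independent symmetric
variables with `|X i| ≤ 1`. Indeed, split such a polynomial as `G + X i • H`. Reflecting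
`X i ↦ -X i` preserves the joint law, so the two-point inequality replaces the polynomial by the
pair `(G, √q • H)`, a multilinear polynomial in the remaining variables with values in the Hilbert
sum `E × E`. Working with vector-valued coefficients thus makes Minkowski's inequality unnecessary.
Finally `∑ n, f n • a n` is a multilinear polynomial in the `f p`, and `d_q(n) = q ^ ω(n)` for
squarefree `n`.
-/

open Finset

theorem add_pow_add_sub_pow {R : Type*} [CommRing R] (x y : R) (n : ℕ) :
    (x + y) ^ n + (x - y) ^ n =
      2 * ∑ j ∈ range (n / 2 + 1), x ^ (n - 2 * j) * y ^ (2 * j) * n.choose (2 * j) := by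
  have parity (k : ℕ) : y ^ k * x ^ (n - k) * n.choose k + (-y) ^ k * x ^ (n - k) * n.choose k =
      if Even k then 2 * (x ^ (n - k) * y ^ k * n.choose k) else 0 := by
    split_ifs with hk
    · rw [hk.neg_pow]; ring
    · rw [(Nat.not_even_iff_odd.1 hk).neg_pow]; ring
  rw [add_comm x y, sub_eq_neg_add, add_pow, add_pow, ← sum_add_distrib, mul_sum]
  simp only [parity, ← sum_filter]
  refine sum_nbij' (· / 2) (2 * ·) ?_ ?_ ?_ ?_ ?_
  · simp only [mem_filter, mem_range]; omega
  · simp only [mem_filter, mem_range, even_two_mul, and_true]; omega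
  · exact fun k hk => Nat.two_mul_div_two_of_even (mem_filter.1 hk).2
  · simp
  · intro k hk; rw [Nat.two_mul_div_two_of_even (mem_filter.1 hk).2]

theorem add_pow_add_sub_pow_le_of_abs_le {x y z : ℝ} (hx : 0 ≤ x) (hyz : |y| ≤ |z|) (n : ℕ) :
    (x + y) ^ n + (x - y) ^ n ≤ (x + z) ^ n + (x - z) ^ n := by
  have hsq : y ^ 2 ≤ z ^ 2 := sq_le_sq.2 hyz
  simp only [add_pow_add_sub_pow, pow_mul y, pow_mul z]
  gcongr

theorem choose_two_mul_two_mul_le (m j : ℕ) :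
    (2 * m).choose (2 * j) ≤ m.choose j * (2 * m - 1) ^ j := by
  induction j with
  | zero => simp
  | succ j ih =>
    have choose_odd := Nat.choose_succ_right_eq (2 * m) (2 * j)
    have choose_even := Nat.choose_succ_right_eq (2 * m) (2 * j + 1)
    have choose_half := Nat.choose_succ_right_eq m j
    refine Nat.le_of_mul_le_mul_right (c := 2 * j + 2) ?_ (by positivity)
    calc (2 * m).choose (2 * j + 2) * (2 * j + 2)
        ≤ (2 * m).choose (2 * j + 2) * (2 * j + 2) * (2 * j + 1) :=
          Nat.le_mul_of_pos_right _ (by positivity)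
      _ = (2 * m).choose (2 * j) * (2 * m - 2 * j) * (2 * m - (2 * j + 1)) := by
          rw [choose_even, ← choose_odd]; ring
      _ ≤ m.choose j * (2 * m - 1) ^ j * (2 * (m - j)) * (2 * m - 1) := by
          gcongr <;> omega
      _ = m.choose j * (m - j) * 2 * (2 * m - 1) ^ (j + 1) := by ring
      _ = m.choose (j + 1) * (2 * m - 1) ^ (j + 1) * (2 * j + 2) := by rw [← choose_half]; ring

theorem add_pow_two_mul_add_sub_pow_two_mul_le (x y : ℝ) (m : ℕ) :
    (x + y) ^ (2 * m) + (x - y) ^ (2 * m) ≤ 2 * (x ^ 2 + (2 * m - 1 : ℕ) * y ^ 2) ^ m := by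
  rw [add_pow_add_sub_pow, Nat.mul_div_cancel_left m two_pos, add_comm (x ^ 2), add_pow]
  refine mul_le_mul_of_nonneg_left (sum_le_sum fun j _ => ?_) two_pos.le
  have hchoose : ((2 * m).choose (2 * j) : ℝ) ≤ m.choose j * (2 * m - 1 : ℕ) ^ j :=
    mod_cast choose_two_mul_two_mul_le m j
  calc x ^ (2 * m - 2 * j) * y ^ (2 * j) * (2 * m).choose (2 * j)
      = (x ^ 2) ^ (m - j) * (y ^ 2) ^ j * (2 * m).choose (2 * j) := by
        rw [← Nat.mul_sub, pow_mul, pow_mul]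
    _ ≤ (x ^ 2) ^ (m - j) * (y ^ 2) ^ j * (m.choose j * (2 * m - 1 : ℕ) ^ j) := by gcongr
    _ = ((2 * m - 1 : ℕ) * y ^ 2) ^ j * (x ^ 2) ^ (m - j) * m.choose j := by ring

theorem norm_add_pow_two_mul_add_norm_sub_pow_two_mul_le {E : Type*} [NormedAddCommGroup E]
    [InnerProductSpace ℝ E] (g h : E) (m : ℕ) :
    ‖g + h‖ ^ (2 * m) + ‖g - h‖ ^ (2 * m) ≤
      2 * (‖g‖ ^ 2 + (2 * m - 1 : ℕ) * ‖h‖ ^ 2) ^ m := by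
  have hinner : |2 * inner ℝ g h| ≤ |2 * (‖g‖ * ‖h‖)| := by
    simpa [abs_mul] using abs_real_inner_le_norm g h
  calc ‖g + h‖ ^ (2 * m) + ‖g - h‖ ^ (2 * m)
      = (‖g‖ ^ 2 + ‖h‖ ^ 2 + 2 * inner ℝ g h) ^ m
          + (‖g‖ ^ 2 + ‖h‖ ^ 2 - 2 * inner ℝ g h) ^ m := by
        rw [pow_mul, pow_mul, norm_add_sq_real, norm_sub_sq_real]; ring
    _ ≤ (‖g‖ ^ 2 + ‖h‖ ^ 2 + 2 * (‖g‖ * ‖h‖)) ^ m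
          + (‖g‖ ^ 2 + ‖h‖ ^ 2 - 2 * (‖g‖ * ‖h‖)) ^ m :=
        add_pow_add_sub_pow_le_of_abs_le (by positivity) hinner m
    _ = (‖g‖ + ‖h‖) ^ (2 * m) + (‖g‖ - ‖h‖) ^ (2 * m) := by
        rw [pow_mul, pow_mul]; ring
    _ ≤ 2 * (‖g‖ ^ 2 + (2 * m - 1 : ℕ) * ‖h‖ ^ 2) ^ m :=
        add_pow_two_mul_add_sub_pow_two_mul_le _ _ m

/-- The multilinear polynomial `∑_{S ⊆ s} (∏_{i ∈ S} x i) • b S` in the variables `x i`, `i ∈ s`,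
with vector-valued coefficients `b S`. -/
def multilinearPoly {ι E : Type*} [AddCommGroup E] [Module ℝ E] (s : Finset ι)
    (b : Finset ι → E) (x : ι → ℝ) : E :=
  ∑ S ∈ s.powerset, (∏ i ∈ S, x i) • b S

section Algebra

variable {ι E : Type*} [DecidableEq ι] [AddCommGroup E] [Module ℝ E] {s : Finset ι} {i : ι}

theorem multilinearPoly_insert (hi : i ∉ s) (b : Finset ι → E) (x : ι → ℝ) :
    multilinearPoly (insert i s) b x =
      multilinearPoly s b x + x i • multilinearPoly s (fun S => b (insert i S)) x := by
  simp only [multilinearPoly, sum_powerset_insert hi, smul_sum, smul_smul]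
  congr 1
  refine sum_congr rfl fun S hS => ?_
  rw [prod_insert fun hiS => hi (mem_powerset.1 hS hiS)]

theorem multilinearPoly_update_of_notMem (hi : i ∉ s) (b : Finset ι → E) (x : ι → ℝ) (t : ℝ) :
    multilinearPoly s b (Function.update x i t) = multilinearPoly s b x := by
  refine sum_congr rfl fun S hS => ?_
  rw [prod_update_of_notMem fun hiS => hi (mem_powerset.1 hS hiS)]

end Algebra

section Norm

variable {ι E : Type*} [NormedAddCommGroup E] [NormedSpace ℝ E]

theorem norm_multilinearPoly_le {s : Finset ι} {x : ι → ℝ} (hx : ∀ i ∈ s, |x i| ≤ 1)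
    (b : Finset ι → E) :
    ‖multilinearPoly s b x‖ ≤ ∑ S ∈ s.powerset, ‖b S‖ := by
  refine norm_sum_le_of_le _ fun S hS => ?_
  rw [norm_smul, Real.norm_eq_abs, abs_prod]
  exact mul_le_of_le_one_left (norm_nonneg _) <|
    prod_le_one (fun i _ => abs_nonneg _) fun i hi => hx i (mem_powerset.1 hS hi)

theorem stronglyMeasurable_multilinearPoly (s : Finset ι) (b : Finset ι → E) :
    StronglyMeasurable (multilinearPoly s b) :=
  Finset.stronglyMeasurable_fun_sum _ fun S _ =>
    (Measurable.stronglyMeasurable (by fun_prop)).smul_const (b S)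

end Norm

/-- The coefficients `(b S, √q • b (insert i S))`, valued in the Hilbert sum `E × E`, that are left
after eliminating the variable `x i` from the multilinear polynomial with coefficients `b`. -/
def eliminateCoeff {ι E : Type*} [DecidableEq ι] [AddCommGroup E] [Module ℝ E] (q : ℕ) (i : ι)
    (b : Finset ι → E) (S : Finset ι) : WithLp 2 (E × E) :=
  WithLp.toLp 2 (b S, √q • b (insert i S))

section Elimination

variable {ι E : Type*} [DecidableEq ι] [NormedAddCommGroup E] [InnerProductSpace ℝ E]
  {s : Finset ι} {i : ι}

theorem norm_sq_eliminateCoeff (q : ℕ) (i : ι) (b : Finset ι → E) (S : Finset ι) :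
    ‖eliminateCoeff q i b S‖ ^ 2 = ‖b S‖ ^ 2 + q * ‖b (insert i S)‖ ^ 2 := by
  simp [eliminateCoeff, WithLp.prod_norm_sq_eq_of_L2, norm_smul, mul_pow]

theorem norm_sq_multilinearPoly_eliminateCoeff (q : ℕ) (s : Finset ι) (i : ι) (b : Finset ι → E)
    (x : ι → ℝ) :
    ‖multilinearPoly s (eliminateCoeff q i b) x‖ ^ 2 =
      ‖multilinearPoly s b x‖ ^ 2 + q * ‖multilinearPoly s (fun S => b (insert i S)) x‖ ^ 2 := by
  have hpair : multilinearPoly s (eliminateCoeff q i b) x = WithLp.toLp 2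
      (multilinearPoly s b x, √q • multilinearPoly s (fun S => b (insert i S)) x) := by
    simp only [multilinearPoly, eliminateCoeff, ← WithLp.toLp_smul, ← WithLp.toLp_sum,
      Prod.smul_mk, prod_mk_sum, smul_sum, smul_comm √(q : ℝ)]
  simp [hpair, WithLp.prod_norm_sq_eq_of_L2, norm_smul, mul_pow]

theorem sum_norm_sq_eliminateCoeff (hi : i ∉ s) (q : ℕ) (b : Finset ι → E) :
    ∑ S ∈ s.powerset, ‖eliminateCoeff q i b S‖ ^ 2 * (q : ℝ) ^ #S =
      ∑ S ∈ (insert i s).powerset, ‖b S‖ ^ 2 * (q : ℝ) ^ #S := by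
  rw [sum_powerset_insert hi, ← sum_add_distrib]
  refine sum_congr rfl fun S hS => ?_
  rw [norm_sq_eliminateCoeff, card_insert_of_notMem fun hiS => hi (mem_powerset.1 hS hiS)]
  ring

theorem norm_multilinearPoly_insert_reflection_le (hi : i ∉ s) (b : Finset ι → E) (m : ℕ)
    {x : ι → ℝ} (hx : |x i| ≤ 1) :
    ‖multilinearPoly (insert i s) b x‖ ^ (2 * m) +
        ‖multilinearPoly (insert i s) b (Function.update x i (-x i))‖ ^ (2 * m) ≤
      2 * ‖multilinearPoly s (eliminateCoeff (2 * m - 1) i b) x‖ ^ (2 * m) := by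
  simp only [multilinearPoly_insert hi, multilinearPoly_update_of_notMem hi, Function.update_self,
    neg_smul, ← sub_eq_add_neg]
  refine (norm_add_pow_two_mul_add_norm_sub_pow_two_mul_le _ _ m).trans ?_
  rw [pow_mul, norm_sq_multilinearPoly_eliminateCoeff, norm_smul]
  gcongr
  exact mul_le_of_le_one_left (norm_nonneg _) hx

end Elimination

section Moments

variable {Ω ι : Type*} [MeasurableSpace Ω] {μ : Measure Ω} {X : ι → Ω → ℝ}

theorem identDistrib_update_neg [Countable ι] [DecidableEq ι] (hindep : iIndepFun X μ)
    (hsymm : ∀ i, IdentDistrib (X i) (-X i) μ μ) (i : ι) :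
    IdentDistrib (fun ω => (X · ω)) (fun ω => Function.update (X · ω) i (-X i ω)) μ μ := by
  let σ : ι → ℝ → ℝ := Function.update (fun _ => id) i Neg.neg
  have hσ (j : ι) : Measurable (σ j) ∧ IdentDistrib (X j) (σ j ∘ X j) μ μ := by
    rcases eq_or_ne j i with rfl | hj
    · simpa [σ] using ⟨measurable_neg, hsymm j⟩
    · simpa [σ, hj] using ⟨measurable_id, IdentDistrib.refl (hsymm j).aemeasurable_fst⟩
  have hupdate : (fun ω => Function.update (X · ω) i (-X i ω)) = fun ω j => σ j (X j ω) := by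
    ext ω j
    rcases eq_or_ne j i with rfl | hj <;> simp [σ, *]
  rw [hupdate]
  exact IdentDistrib.pi (fun j => (hσ j).2) hindep (hindep.comp σ fun j => (hσ j).1)

theorem integrable_norm_multilinearPoly_pow [IsFiniteMeasure μ] {E : Type*}
    [NormedAddCommGroup E] [NormedSpace ℝ E] (hmeas : AEMeasurable (fun ω => (X · ω)) μ)
    {s : Finset ι} (hbdd : ∀ i ∈ s, ∀ᵐ ω ∂μ, |X i ω| ≤ 1) (b : Finset ι → E) (n : ℕ) :
    Integrable (fun ω => ‖multilinearPoly s b (X · ω)‖ ^ n) μ := by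
  refine .of_bound (C := (∑ S ∈ s.powerset, ‖b S‖) ^ n) ?_ ?_
  · exact ((stronglyMeasurable_multilinearPoly s b).norm.pow n).measurable.comp_aemeasurable hmeas
      |>.aestronglyMeasurable
  · filter_upwards [(Finset.eventually_all s).2 hbdd] with ω hω
    rw [norm_pow, norm_norm]
    gcongr
    exact norm_multilinearPoly_le hω b

theorem integral_norm_multilinearPoly_insert_le [Countable ι] [DecidableEq ι] {E : Type*}
    [NormedAddCommGroup E] [InnerProductSpace ℝ E] (hindep : iIndepFun X μ)
    (hsymm : ∀ i, IdentDistrib (X i) (-X i) μ μ) (hbdd : ∀ i, ∀ᵐ ω ∂μ, |X i ω| ≤ 1)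
    {s : Finset ι} {i : ι} (hi : i ∉ s) (b : Finset ι → E) (m : ℕ) :
    ∫ ω, ‖multilinearPoly (insert i s) b (X · ω)‖ ^ (2 * m) ∂μ ≤
      ∫ ω, ‖multilinearPoly s (eliminateCoeff (2 * m - 1) i b) (X · ω)‖ ^ (2 * m) ∂μ := by
  have := hindep.isProbabilityMeasure
  have hreflect := identDistrib_update_neg hindep hsymm i
  have hlaw := hreflect.comp
    ((stronglyMeasurable_multilinearPoly (insert i s) b).norm.pow (2 * m)).measurable
  have hintegrable : Integrable (fun ω => ‖multilinearPoly (insert i s) b (X · ω)‖ ^ (2 * m)) μ :=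
    integrable_norm_multilinearPoly_pow hreflect.aemeasurable_fst (fun j _ => hbdd j) _ _
  have hintegrable' := hlaw.integrable_snd hintegrable
  suffices 2 * ∫ ω, ‖multilinearPoly (insert i s) b (X · ω)‖ ^ (2 * m) ∂μ ≤
      2 * ∫ ω, ‖multilinearPoly s (eliminateCoeff (2 * m - 1) i b) (X · ω)‖ ^ (2 * m) ∂μ from
    le_of_mul_le_mul_left this two_pos
  calc 2 * ∫ ω, ‖multilinearPoly (insert i s) b (X · ω)‖ ^ (2 * m) ∂μ
      = ∫ ω, ‖multilinearPoly (insert i s) b (X · ω)‖ ^ (2 * m) +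
          ‖multilinearPoly (insert i s) b (Function.update (X · ω) i (-X i ω))‖ ^ (2 * m) ∂μ := by
        rw [two_mul]
        exact (congrArg _ hlaw.integral_eq).trans (integral_add hintegrable hintegrable').symm
    _ ≤ ∫ ω, 2 * ‖multilinearPoly s (eliminateCoeff (2 * m - 1) i b) (X · ω)‖ ^ (2 * m) ∂μ := by
        refine integral_mono_ae (hintegrable.add hintegrable') ?_ ?_
        · exact (integrable_norm_multilinearPoly_pow hreflect.aemeasurable_fst
            (fun j _ => hbdd j) _ _).const_mul 2
        · filter_upwards [hbdd i] with ω hω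
          exact norm_multilinearPoly_insert_reflection_le hi b m hω
    _ = 2 * ∫ ω, ‖multilinearPoly s (eliminateCoeff (2 * m - 1) i b) (X · ω)‖ ^ (2 * m) ∂μ :=
        integral_const_mul _ _

theorem integral_norm_multilinearPoly_pow_le [Countable ι] {E : Type*} [NormedAddCommGroup E]
    [InnerProductSpace ℝ E] (hindep : iIndepFun X μ)
    (hsymm : ∀ i, IdentDistrib (X i) (-X i) μ μ) (hbdd : ∀ i, ∀ᵐ ω ∂μ, |X i ω| ≤ 1)
    (s : Finset ι) (b : Finset ι → E) (m : ℕ) :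
    ∫ ω, ‖multilinearPoly s b (X · ω)‖ ^ (2 * m) ∂μ ≤
      (∑ S ∈ s.powerset, ‖b S‖ ^ 2 * ((2 * m - 1 : ℕ) : ℝ) ^ #S) ^ m := by
  classical
  induction s using Finset.induction_on generalizing E with
  | empty =>
    have := hindep.isProbabilityMeasure
    simp [multilinearPoly, pow_mul]
  | insert i s hi ih =>
    calc ∫ ω, ‖multilinearPoly (insert i s) b (X · ω)‖ ^ (2 * m) ∂μ
        ≤ ∫ ω, ‖multilinearPoly s (eliminateCoeff (2 * m - 1) i b) (X · ω)‖ ^ (2 * m) ∂μ :=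
          integral_norm_multilinearPoly_insert_le hindep hsymm hbdd hi b m
      _ ≤ (∑ S ∈ s.powerset,
            ‖eliminateCoeff (2 * m - 1) i b S‖ ^ 2 * ((2 * m - 1 : ℕ) : ℝ) ^ #S) ^ m := ih _
      _ = (∑ S ∈ (insert i s).powerset, ‖b S‖ ^ 2 * ((2 * m - 1 : ℕ) : ℝ) ^ #S) ^ m := by
          rw [sum_norm_sq_eliminateCoeff hi]

theorem integral_norm_sum_prod_smul_pow_le [Countable ι] {E : Type*} [NormedAddCommGroup E]
    [InnerProductSpace ℝ E] (hindep : iIndepFun X μ)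
    (hsymm : ∀ i, IdentDistrib (X i) (-X i) μ μ) (hbdd : ∀ i, ∀ᵐ ω ∂μ, |X i ω| ≤ 1)
    (𝒜 : Finset (Finset ι)) (b : Finset ι → E) (m : ℕ) :
    ∫ ω, ‖∑ S ∈ 𝒜, (∏ i ∈ S, X i ω) • b S‖ ^ (2 * m) ∂μ ≤
      (∑ S ∈ 𝒜, ‖b S‖ ^ 2 * ((2 * m - 1 : ℕ) : ℝ) ^ #S) ^ m := by
  classical
  have hsub : (𝒜.sup id).powerset ∩ 𝒜 = 𝒜 :=
    inter_eq_right.2 fun S hS => mem_powerset.2 (le_sup (f := id) hS)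
  simpa [multilinearPoly, smul_ite, apply_ite norm, ite_pow, ite_mul, sum_ite_mem, hsub] using
    integral_norm_multilinearPoly_pow_le hindep hsymm hbdd (𝒜.sup id)
      (fun S => if S ∈ 𝒜 then b S else 0) m

end Moments

/-- The set of prime divisors of `n`, as a set of elements of `Nat.Primes`, the index type of the
independent variables `f p`. -/
def primeDivisors (n : ℕ) : Finset Nat.Primes := n.primeFactors.subtype Nat.Prime

theorem prod_primeDivisors {M : Type*} [CommMonoid M] (g : ℕ → M) (n : ℕ) :
    ∏ p ∈ primeDivisors n, g p = ∏ p ∈ n.primeFactors, g p :=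
  prod_subtype_of_mem g fun _ => Nat.prime_of_mem_primeFactors

theorem prod_primeDivisors_of_squarefree {n : ℕ} (hn : Squarefree n) :
    ∏ p ∈ primeDivisors n, (p : ℕ) = n :=
  (prod_primeDivisors id n).trans (Nat.prod_primeFactors_of_squarefree hn)

theorem card_primeDivisors (n : ℕ) : #(primeDivisors n) = #n.primeFactors :=
  (card_subtype _ _).trans <|
    congrArg card (filter_true_of_mem fun _ => Nat.prime_of_mem_primeFactors)

theorem dFold_of_squarefree (k : ℕ) {n : ℕ} (hn : Squarefree n) :
    dFold k n = k ^ #(primeDivisors n) := by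
  have hcard : dFold k n = #(Nat.finMulAntidiag k n) :=
    Nat.subtype_card _ fun v => by simp [hn.ne_zero]
  rw [hcard, Nat.card_finMulAntidiag_of_squarefree hn, card_primeDivisors]
  rfl

theorem hypercontractive_rademacher_general {Ω E : Type*} [MeasurableSpace Ω] {μ : Measure Ω}
    [NormedAddCommGroup E] [InnerProductSpace ℝ E] {f : Ω → ℕ → ℝ}
    (hindep : iIndepFun (fun (p : Nat.Primes) ω => f ω p) μ)
    (hsymm : ∀ p : Nat.Primes, IdentDistrib (fun ω => f ω p) (fun ω => -f ω p) μ μ)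
    (hbdd : ∀ p : Nat.Primes, ∀ᵐ ω ∂μ, |f ω p| ≤ 1)
    (hzero : ∀ ω n, ¬Squarefree n → f ω n = 0)
    (hprod : ∀ ω n, Squarefree n → f ω n = ∏ p ∈ n.primeFactors, f ω p)
    (a : ℕ → E) (A : Finset ℕ) (m : ℕ) :
    ∫ ω, ‖∑ n ∈ A, f ω n • a n‖ ^ (2 * m) ∂μ ≤
      (∑ n ∈ A, ‖a n‖ ^ 2 * (dFold (2 * m - 1) n : ℝ)) ^ m := by
  classical
  set B := A.filter Squarefree
  set b : Finset Nat.Primes → E := fun S => a (∏ p ∈ S, (p : ℕ))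
  have hB {n : ℕ} (hn : n ∈ B) : Squarefree n := (mem_filter.1 hn).2
  have hinj : Set.InjOn primeDivisors B := fun n hn k hk h => by
    rw [← prod_primeDivisors_of_squarefree (hB hn), h, prod_primeDivisors_of_squarefree (hB hk)]
  have hpoly (ω : Ω) : ∑ n ∈ A, f ω n • a n =
      ∑ S ∈ B.image primeDivisors, (∏ p ∈ S, f ω p) • b S := by
    rw [sum_image hinj, ← sum_filter_of_ne (p := Squarefree)]
    · refine sum_congr rfl fun n hn => ?_
      rw [prod_primeDivisors, hprod ω n (hB hn)]
      simp only [b, prod_primeDivisors_of_squarefree (hB hn)]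
    · exact fun n _ hne => not_imp_comm.1 (hzero ω n) fun h => hne (by rw [h, zero_smul])
  simp only [hpoly]
  refine (integral_norm_sum_prod_smul_pow_le hindep hsymm hbdd _ b m).trans ?_
  gcongr
  rw [sum_image hinj]
  calc ∑ n ∈ B, ‖b (primeDivisors n)‖ ^ 2 * ((2 * m - 1 : ℕ) : ℝ) ^ #(primeDivisors n)
      = ∑ n ∈ B, ‖a n‖ ^ 2 * (dFold (2 * m - 1) n : ℝ) := by
        refine sum_congr rfl fun n hn => ?_
        simp only [b, prod_primeDivisors_of_squarefree (hB hn), dFold_of_squarefree _ (hB hn),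
          Nat.cast_pow]
    _ ≤ ∑ n ∈ A, ‖a n‖ ^ 2 * (dFold (2 * m - 1) n : ℝ) :=
        sum_le_sum_of_subset_of_nonneg (filter_subset _ _) fun n _ _ => by positivity

namespace IsRademacherRMF

variable {Ω : Type*} [MeasurableSpace Ω] {μ : Measure Ω} {f : Ω → ℕ → ℝ}

theorem ae_eq_one_or_eq_neg_one (hf : IsRademacherRMF μ f) {p : ℕ} (hp : p.Prime) :
    ∀ᵐ ω ∂μ, f ω p = 1 ∨ f ω p = -1 := by
  have := hf.indep.isProbabilityMeasure
  have hone : MeasurableSet {ω | f ω p = 1} := hf.meas p (measurableSet_singleton 1)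
  have hneg : MeasurableSet {ω | f ω p = -1} := hf.meas p (measurableSet_singleton (-1))
  have hdisj : Disjoint {ω | f ω p = 1} {ω | f ω p = -1} :=
    Set.disjoint_left.2 fun ω (h : f ω p = 1) (h' : f ω p = -1) => by linarith
  refine (prob_compl_eq_zero_iff (hone.union hneg)).2 ?_
  rw [measure_union hdisj hneg, hf.prob_one p hp, hf.prob_neg_one p hp, ENNReal.add_halves]

theorem ae_abs_le_one (hf : IsRademacherRMF μ f) {p : ℕ} (hp : p.Prime) :
    ∀ᵐ ω ∂μ, |f ω p| ≤ 1 := by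
  filter_upwards [hf.ae_eq_one_or_eq_neg_one hp] with ω hω
  rcases hω with h | h <;> simp [h]

theorem map_eq_dirac_add_dirac (hf : IsRademacherRMF μ f) {p : ℕ} (hp : p.Prime) :
    μ.map (fun ω => f ω p) =
      (1 / 2 : ENNReal) • Measure.dirac 1 + (1 / 2 : ENNReal) • Measure.dirac (-1) := by
  have hsupp : ∀ᵐ x ∂μ.map (fun ω => f ω p), x ∈ ({1} ∪ {-1} : Set ℝ) :=
    (ae_map_iff (hf.meas p).aemeasurable (by measurability)).2 (hf.ae_eq_one_or_eq_neg_one hp)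
  have hdisj : Disjoint ({1} : Set ℝ) {-1} := by norm_num
  rw [← Measure.restrict_eq_self_of_ae_mem hsupp,
    Measure.restrict_union hdisj (measurableSet_singleton _), Measure.restrict_singleton,
    Measure.restrict_singleton, Measure.map_apply (hf.meas p) (measurableSet_singleton _),
    Measure.map_apply (hf.meas p) (measurableSet_singleton _)]
  exact congrArg₂ (· • _ + · • _) (hf.prob_one p hp) (hf.prob_neg_one p hp)

theorem identDistrib_neg (hf : IsRademacherRMF μ f) {p : ℕ} (hp : p.Prime) :
    IdentDistrib (fun ω => f ω p) (fun ω => -f ω p) μ μ where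
  aemeasurable_fst := (hf.meas p).aemeasurable
  aemeasurable_snd := (hf.meas p).neg.aemeasurable
  map_eq := by
    have hmap : μ.map (fun ω => -f ω p) = (μ.map fun ω => f ω p).map Neg.neg :=
      (Measure.map_map measurable_neg (hf.meas p)).symm
    rw [hmap, hf.map_eq_dirac_add_dirac hp, Measure.map_add _ _ measurable_neg]
    simp [Measure.map_smul, Measure.map_dirac' measurable_neg, add_comm]

end IsRademacherRMF

/-- Hypercontractive inequality, Rademacher case:
`E[|∑_{n ≥ 1} aₙ f(n)|^{2m}] ≤ (∑_{n ≥ 1} |aₙ|² d_{2m-1}(n))^m`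
for finitely supported sequences `(aₙ)_{n ≥ 1}` of complex numbers. -/
theorem hypercontractive_rademacher
    {Ω : Type*} [MeasurableSpace Ω] (μ : Measure Ω) [IsProbabilityMeasure μ]
    (f : Ω → ℕ → ℝ) (hf : IsRademacherRMF μ f)
    (a : ℕ → ℂ) (N : ℕ) (m : ℕ) (hm : 1 ≤ m) :
    ∫ ω, ‖∑ n ∈ Finset.Icc 1 N, a n * (f ω n : ℂ)‖ ^ (2 * m) ∂μ ≤
      (∑ n ∈ Finset.Icc 1 N, ‖a n‖ ^ 2 * (dFold (2 * m - 1) n : ℝ)) ^ m := by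
  simpa only [Complex.real_smul, mul_comm] using
    hypercontractive_rademacher_general hf.indep (fun p => hf.identDistrib_neg p.2)
      (fun p => hf.ae_abs_le_one p.2) hf.eq_zero_of_not_squarefree hf.eq_prod_of_squarefree
      a (Icc 1 N) m
end
end

section
/- (Hypercontractive inequality, Steinhaus case.) Let f be a Steinhaus random multiplicative function, let (a_n)_{n ≥ 1} be a finitely supported sequence of complex numbers, and let m ≥ 1 be an integer. Then E[|∑_{n ≥ 1} a_n f(n)|^{2m}] ≤ (∑_{n ≥ 1} |a_n|² d_{2m−1}(n))^m. -/
open MeasureTheory ProbabilityTheory Real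

noncomputable section

/-- A Steinhaus random multiplicative function. -/
structure IsSteinhausRMF {Ω : Type*} [MeasurableSpace Ω] (μ : Measure Ω)
    (f : Ω → ℕ → ℂ) : Prop where
  meas : ∀ n : ℕ, Measurable fun ω => f ω n
  indep : iIndepFun (m := fun _ : Nat.Primes => (inferInstance : MeasurableSpace ℂ))
    (fun (p : Nat.Primes) (ω : Ω) => f ω (p : ℕ)) μ
  unif : ∀ p : ℕ, p.Prime →
    Measure.map (fun ω => f ω p) μ =
      Measure.map (fun θ : ℝ => Complex.exp (2 * π * θ * Complex.I))
        (volume.restrict (Set.Ioc (0 : ℝ) 1))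
  map_one : ∀ ω : Ω, f ω 1 = 1
  map_mul : ∀ (ω : Ω) (m n : ℕ), 1 ≤ m → 1 ≤ n → f ω (m * n) = f ω m * f ω n

/-! Since `f` is completely multiplicative, `(∑ aₙ f(n))^m = ∑ₖ bₖ f(k)`, where `bₖ` is the sum of
`a_{v₁} ⋯ a_{vₘ}` over the factorizations `k = v₁ ⋯ vₘ`. The `f(k)` are orthonormal in `L²`, so the
`2m`-th moment equals `∑ₖ |bₖ|²`. By Cauchy–Schwarz `|bₖ|²` is at most `dₘ(k)` times the sum of
`|a_{v₁}|² ⋯ |a_{vₘ}|²` over the same factorizations, and `dₘ(v₁ ⋯ vₘ) ≤ dₘ(v₁) ⋯ dₘ(vₘ)`, so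
summing over `k` gives at most `(∑ |aₙ|² dₘ(n))^m`. Finally `dₘ ≤ d_{2m-1}`. -/

/-! ### Divisor functions -/

theorem exists_prod_eq_and_forall_dvd_of_dvd_prod {ι α : Type*} [CommMonoid α]
    [DecompositionMonoid α] [Subsingleton αˣ] {s : Finset ι} {v : ι → α} {a : α}
    (ha : a ∣ ∏ i ∈ s, v i) : ∃ u : ι → α, ∏ i ∈ s, u i = a ∧ ∀ i ∈ s, u i ∣ v i := by
  classical
  induction s using Finset.induction_on generalizing a with
  | empty =>
    rw [Finset.prod_empty, ← isUnit_iff_dvd_one, isUnit_iff_eq_one] at ha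
    exact ⟨1, by simp [ha], by simp⟩
  | insert j s hj ih =>
    rw [Finset.prod_insert hj] at ha
    obtain ⟨b, c, hb, hc, rfl⟩ := exists_dvd_and_dvd_of_dvd_mul ha
    obtain ⟨u, rfl, hu⟩ := ih hc
    refine ⟨Function.update u j b, ?_, ?_⟩
    · rw [Finset.prod_insert hj, Function.update_self, Finset.prod_update_of_notMem hj]
    · refine Finset.forall_mem_insert .. |>.mpr ⟨by simpa using hb, fun i hi => ?_⟩
      rw [Function.update_of_ne (ne_of_mem_of_not_mem hi hj)]
      exact hu i hi

theorem dFold_eq_card_finMulAntidiag (k : ℕ) {n : ℕ} (hn : n ≠ 0) :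
    dFold k n = (Nat.finMulAntidiag k n).card :=
  Nat.subtype_card _ fun _ => by simp [Nat.mem_finMulAntidiag, hn]

theorem dFold_one_right (k : ℕ) : dFold k 1 = 1 := by
  rw [dFold_eq_card_finMulAntidiag k one_ne_zero, Nat.finMulAntidiag_one, Finset.card_singleton]

theorem dFold_mono_left {n : ℕ} (hn : n ≠ 0) : Monotone fun k => dFold k n := by
  refine monotone_nat_of_le_succ fun k => ?_
  rw [dFold_eq_card_finMulAntidiag k hn, dFold_eq_card_finMulAntidiag (k + 1) hn]
  refine Finset.card_le_card_of_injOn (Fin.cons (α := fun _ => ℕ) 1) (fun v hv => ?_)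
    (Fin.cons_right_injective 1).injOn
  rw [Finset.mem_coe, Nat.mem_finMulAntidiag] at hv ⊢
  simpa [Fin.prod_univ_succ] using hv

theorem finMulAntidiag_mul_subset (k : ℕ) {a b : ℕ} (ha : a ≠ 0) (hb : b ≠ 0) :
    Nat.finMulAntidiag k (a * b) ⊆
      Finset.image₂ (· * ·) (Nat.finMulAntidiag k a) (Nat.finMulAntidiag k b) := by
  intro v hv
  have hvab : ∏ i, v i = a * b := Nat.prod_eq_of_mem_finMulAntidiag hv
  obtain ⟨u, hu, huv⟩ := exists_prod_eq_and_forall_dvd_of_dvd_prod (Dvd.intro _ hvab.symm)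
  choose w hw using fun i => huv i (Finset.mem_univ i)
  have hwb : ∏ i, w i = b := by
    refine Nat.eq_of_mul_eq_mul_left (Nat.pos_of_ne_zero ha) ?_
    rw [← hvab, ← hu, ← Finset.prod_mul_distrib, Finset.prod_congr rfl fun i _ => hw i]
  exact Finset.mem_image₂.mpr ⟨u, Nat.mem_finMulAntidiag.mpr ⟨hu, ha⟩,
    w, Nat.mem_finMulAntidiag.mpr ⟨hwb, hb⟩, (funext hw).symm⟩

theorem dFold_mul_le (k : ℕ) {a b : ℕ} (ha : a ≠ 0) (hb : b ≠ 0) :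
    dFold k (a * b) ≤ dFold k a * dFold k b := by
  rw [dFold_eq_card_finMulAntidiag k ha, dFold_eq_card_finMulAntidiag k hb,
    dFold_eq_card_finMulAntidiag k (mul_ne_zero ha hb)]
  exact (Finset.card_le_card (finMulAntidiag_mul_subset k ha hb)).trans
    (Finset.card_image₂_le ..)

theorem dFold_prod_le {ι : Type*} (k : ℕ) (s : Finset ι) {v : ι → ℕ} (hv : ∀ i ∈ s, v i ≠ 0) :
    dFold k (∏ i ∈ s, v i) ≤ ∏ i ∈ s, dFold k (v i) :=
  Finset.le_prod_of_submultiplicative_on_pred_of_nonneg (dFold k) (· ≠ 0)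
    (fun _ => Nat.zero_le _) (dFold_one_right k).le (fun _ _ => dFold_mul_le k)
    (fun _ _ => mul_ne_zero) s v hv

/-! ### Powers of a Dirichlet polynomial -/

/-- The `k`-th coefficient of the `m`-th power of the Dirichlet polynomial with coefficients `a n`,
`n ∈ s`: the value at `k` of the `m`-fold Dirichlet convolution power of `a` restricted to `s`. -/
def dirichletPowCoeff {R : Type*} [CommSemiring R] (s : Finset ℕ) (a : ℕ → R) (m k : ℕ) : R :=
  ∑ v ∈ Fintype.piFinset (fun _ : Fin m => s) with ∏ i, v i = k, ∏ i, a (v i)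

/-- The `m`-fold product set of `s`, a finite set outside which `dirichletPowCoeff s a m`
vanishes. -/
def productSet (s : Finset ℕ) (m : ℕ) : Finset ℕ :=
  (Fintype.piFinset fun _ : Fin m => s).image fun v => ∏ i, v i

theorem prod_mem_productSet {s : Finset ℕ} {m : ℕ} {v : Fin m → ℕ}
    (hv : v ∈ Fintype.piFinset fun _ => s) : ∏ i, v i ∈ productSet s m :=
  Finset.mem_image_of_mem _ hv

theorem ne_zero_of_mem_piFinset {ι : Type*} [Fintype ι] [DecidableEq ι] {α : Type*} [Zero α]
    {s : Finset α} (hs : 0 ∉ s) {v : ι → α} (hv : v ∈ Fintype.piFinset fun _ => s) (i : ι) :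
    v i ≠ 0 :=
  ne_of_mem_of_not_mem (Fintype.mem_piFinset.mp hv i) hs

theorem ne_zero_of_mem_productSet {s : Finset ℕ} (hs : 0 ∉ s) {m k : ℕ}
    (hk : k ∈ productSet s m) : k ≠ 0 := by
  obtain ⟨v, hv, rfl⟩ := Finset.mem_image.mp hk
  exact Finset.prod_ne_zero_iff.mpr fun i _ => ne_zero_of_mem_piFinset hs hv i

theorem sum_pow_eq_sum_dirichletPowCoeff {R : Type*} [CommSemiring R] (s : Finset ℕ) (a F : ℕ → R)
    (m : ℕ) (hF : ∀ v ∈ Fintype.piFinset fun _ : Fin m => s, F (∏ i, v i) = ∏ i, F (v i)) :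
    (∑ n ∈ s, a n * F n) ^ m = ∑ k ∈ productSet s m, dirichletPowCoeff s a m k * F k := by
  rw [Finset.sum_pow', ← Finset.sum_fiberwise_of_maps_to fun v hv => prod_mem_productSet hv]
  refine Finset.sum_congr rfl fun k _ => ?_
  rw [dirichletPowCoeff, Finset.sum_mul]
  refine Finset.sum_congr rfl fun v hv => ?_
  obtain ⟨hvs, rfl⟩ := Finset.mem_filter.mp hv
  rw [hF v hvs, Finset.prod_mul_distrib]

section NormBound

variable {R : Type*} [NormedCommRing R] [NormOneClass R]

theorem norm_dirichletPowCoeff_sq_le (s : Finset ℕ) (a : ℕ → R) (m : ℕ) {k : ℕ} (hk : k ≠ 0) :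
    ‖dirichletPowCoeff s a m k‖ ^ 2 ≤ dFold m k * dirichletPowCoeff s (fun n => ‖a n‖ ^ 2) m k := by
  set V := {v ∈ Fintype.piFinset fun _ : Fin m => s | ∏ i, v i = k} with hV
  have hcard : V.card ≤ dFold m k := by
    rw [dFold_eq_card_finMulAntidiag m hk]
    exact Finset.card_le_card fun v hv =>
      Nat.mem_finMulAntidiag.mpr ⟨(Finset.mem_filter.mp hv).2, hk⟩
  calc ‖dirichletPowCoeff s a m k‖ ^ 2
      ≤ (∑ v ∈ V, ∏ i, ‖a (v i)‖) ^ 2 := by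
        gcongr
        exact norm_sum_le_of_le _ fun v _ => Finset.norm_prod_le _ _
    _ ≤ V.card * ∑ v ∈ V, (∏ i, ‖a (v i)‖) ^ 2 := sq_sum_le_card_mul_sum_sq
    _ ≤ dFold m k * ∑ v ∈ V, (∏ i, ‖a (v i)‖) ^ 2 := by gcongr
    _ = dFold m k * dirichletPowCoeff s (fun n => ‖a n‖ ^ 2) m k := by
        simp only [dirichletPowCoeff, Finset.prod_pow, hV]

theorem sum_norm_dirichletPowCoeff_sq_le {s : Finset ℕ} (hs : 0 ∉ s) (a : ℕ → R) (m : ℕ) :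
    ∑ k ∈ productSet s m, ‖dirichletPowCoeff s a m k‖ ^ 2 ≤
      (∑ n ∈ s, ‖a n‖ ^ 2 * dFold m n) ^ m := by
  calc ∑ k ∈ productSet s m, ‖dirichletPowCoeff s a m k‖ ^ 2
      ≤ ∑ k ∈ productSet s m, dFold m k * dirichletPowCoeff s (fun n => ‖a n‖ ^ 2) m k :=
        Finset.sum_le_sum fun k hk =>
          norm_dirichletPowCoeff_sq_le s a m (ne_zero_of_mem_productSet hs hk)
    _ = ∑ v ∈ Fintype.piFinset fun _ : Fin m => s,
          dFold m (∏ i, v i) * ∏ i, ‖a (v i)‖ ^ 2 := by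
        rw [← Finset.sum_fiberwise_of_maps_to fun v hv => prod_mem_productSet hv]
        refine Finset.sum_congr rfl fun k _ => ?_
        rw [dirichletPowCoeff, Finset.mul_sum]
        exact Finset.sum_congr rfl fun v hv => by rw [(Finset.mem_filter.mp hv).2]
    _ ≤ ∑ v ∈ Fintype.piFinset fun _ : Fin m => s, ∏ i, ‖a (v i)‖ ^ 2 * dFold m (v i) := by
        refine Finset.sum_le_sum fun v hv => ?_
        rw [Finset.prod_mul_distrib, mul_comm]
        gcongr
        exact_mod_cast dFold_prod_le m Finset.univ fun i _ => ne_zero_of_mem_piFinset hs hv i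
    _ = (∑ n ∈ s, ‖a n‖ ^ 2 * dFold m n) ^ m := by
        rw [Finset.sum_pow']

end NormBound

/-! ### Orthonormality of a Steinhaus random multiplicative function -/

section Orthonormality

open scoped ComplexConjugate

theorem integral_norm_sum_sq_of_orthonormal {Ω ι 𝕜 : Type*} [MeasurableSpace Ω] [RCLike 𝕜]
    [DecidableEq ι] {μ : Measure Ω} {T : Finset ι} {g : ι → Ω → 𝕜}
    (hg : ∀ i ∈ T, MemLp (g i) 2 μ)
    (horth : ∀ i ∈ T, ∀ j ∈ T, ∫ ω, g i ω * conj (g j ω) ∂μ = if i = j then 1 else 0) (b : ι → 𝕜) :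
    ∫ ω, ‖∑ i ∈ T, b i * g i ω‖ ^ 2 ∂μ = ∑ i ∈ T, ‖b i‖ ^ 2 := by
  have hint : ∀ i ∈ T, ∀ j ∈ T,
      Integrable (fun ω => b i * conj (b j) * (g i ω * conj (g j ω))) μ := fun i hi j hj =>
    ((hg i hi).integrable_mul (hg j hj).star).const_mul _
  have hexpand : ∀ ω, ((‖∑ i ∈ T, b i * g i ω‖ ^ 2 : ℝ) : 𝕜) =
      ∑ i ∈ T, ∑ j ∈ T, b i * conj (b j) * (g i ω * conj (g j ω)) := by
    intro ω
    rw [RCLike.ofReal_pow, ← RCLike.mul_conj, map_sum, Finset.sum_mul_sum]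
    exact Finset.sum_congr rfl fun i _ => Finset.sum_congr rfl fun j _ => by rw [map_mul]; ring
  apply RCLike.ofReal_injective (K := 𝕜)
  rw [← integral_ofReal]
  simp_rw [hexpand]
  rw [integral_finsetSum _ fun i hi => integrable_finsetSum _ fun j hj => hint i hi j hj,
    RCLike.ofReal_sum]
  refine Finset.sum_congr rfl fun i hi => ?_
  calc ∫ ω, ∑ j ∈ T, b i * conj (b j) * (g i ω * conj (g j ω)) ∂μ
      = ∑ j ∈ T, b i * conj (b j) * if i = j then 1 else 0 := by
        rw [integral_finsetSum _ fun j hj => hint i hi j hj]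
        exact Finset.sum_congr rfl fun j hj => by rw [integral_const_mul, horth i hi j hj]
    _ = ((‖b i‖ ^ 2 : ℝ) : 𝕜) := by
        simp only [mul_ite, mul_one, mul_zero, Finset.sum_ite_eq, hi, if_true, RCLike.mul_conj,
          RCLike.ofReal_pow]

theorem integral_exp_pow_mul_conj_exp_pow_of_ne {α β : ℕ} (h : α ≠ β) :
    ∫ θ in (0 : ℝ)..1, Complex.exp (2 * π * θ * Complex.I) ^ α *
      conj (Complex.exp (2 * π * θ * Complex.I)) ^ β = 0 := by
  set c : ℂ := 2 * π * Complex.I * (α - β) with hc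
  have hc0 : c ≠ 0 :=
    mul_ne_zero Complex.two_pi_I_ne_zero (sub_ne_zero.mpr (by exact_mod_cast h))
  have hexp : ∀ θ : ℝ, Complex.exp (2 * π * θ * Complex.I) ^ α *
      conj (Complex.exp (2 * π * θ * Complex.I)) ^ β = Complex.exp (c * θ) := by
    intro θ
    rw [← Complex.exp_conj, ← Complex.exp_nat_mul, ← Complex.exp_nat_mul, ← Complex.exp_add]
    simp only [map_mul, Complex.conj_ofNat, Complex.conj_ofReal, Complex.conj_I, hc]
    ring_nf
  have hperiod : Complex.exp c = 1 :=
    Complex.exp_eq_one_iff.mpr ⟨(α : ℤ) - β, by push_cast; ring⟩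
  simp only [hexp, integral_exp_mul_complex hc0, Complex.ofReal_one, mul_one, hperiod,
    Complex.ofReal_zero, mul_zero, Complex.exp_zero, sub_self, zero_div]

namespace IsSteinhausRMF

variable {Ω : Type*} [MeasurableSpace Ω] {μ : Measure Ω} {f : Ω → ℕ → ℂ}

protected theorem map_prod (hf : IsSteinhausRMF μ f) (ω : Ω) {ι : Type*} (s : Finset ι) {v : ι → ℕ}
    (hv : ∀ i ∈ s, v i ≠ 0) : f ω (∏ i ∈ s, v i) = ∏ i ∈ s, f ω (v i) := by
  classical
  induction s using Finset.induction_on with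
  | empty => exact hf.map_one ω
  | insert j s hj ih =>
    obtain ⟨hvj, hvs⟩ := (Finset.forall_mem_insert ..).mp hv
    rw [Finset.prod_insert hj, Finset.prod_insert hj, ← ih hvs]
    exact hf.map_mul ω _ _ (Nat.one_le_iff_ne_zero.mpr hvj)
      (Nat.one_le_iff_ne_zero.mpr (Finset.prod_ne_zero_iff.mpr hvs))

protected theorem map_pow (hf : IsSteinhausRMF μ f) (ω : Ω) {n : ℕ} (hn : n ≠ 0) (k : ℕ) :
    f ω (n ^ k) = f ω n ^ k := by
  simpa using hf.map_prod ω (Finset.range k) (v := fun _ => n) fun _ _ => hn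

theorem eq_prod_pow_factorization (hf : IsSteinhausRMF μ f) (ω : Ω) {n : ℕ} (hn : n ≠ 0)
    {s : Finset ℕ} (hns : n.primeFactors ⊆ s) (hs : ∀ p ∈ s, p ≠ 0) :
    f ω n = ∏ p ∈ s, f ω p ^ n.factorization p := by
  calc f ω n = f ω (∏ p ∈ s, p ^ n.factorization p) := by
        rw [← Finsupp.prod_of_support_subset _ hns _ (by simp),
          Nat.prod_factorization_pow_eq_self hn]
    _ = ∏ p ∈ s, f ω (p ^ n.factorization p) :=
        hf.map_prod ω s fun p hp => pow_ne_zero _ (hs p hp)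
    _ = ∏ p ∈ s, f ω p ^ n.factorization p :=
        Finset.prod_congr rfl fun p hp => hf.map_pow ω (hs p hp) _

theorem ae_norm_prime_eq_one (hf : IsSteinhausRMF μ f) {p : ℕ} (hp : p.Prime) :
    ∀ᵐ ω ∂μ, ‖f ω p‖ = 1 := by
  have hmeas : MeasurableSet {z : ℂ | ‖z‖ = 1} := measurableSet_eq_fun (by fun_prop) (by fun_prop)
  have hexp : Measurable fun θ : ℝ => Complex.exp (2 * π * θ * Complex.I) := by fun_prop
  rw [← ae_map_iff (hf.meas p).aemeasurable hmeas, hf.unif p hp,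
    ae_map_iff hexp.aemeasurable hmeas]
  exact Filter.Eventually.of_forall fun θ => mod_cast Complex.norm_exp_ofReal_mul_I (2 * π * θ)

theorem ae_norm_eq_one (hf : IsSteinhausRMF μ f) {n : ℕ} (hn : n ≠ 0) :
    ∀ᵐ ω ∂μ, ‖f ω n‖ = 1 := by
  have hprimes : ∀ᵐ ω ∂μ, ∀ p ∈ n.primeFactors, ‖f ω p‖ = 1 :=
    (Filter.eventually_all_finset _).mpr fun p hp =>
      hf.ae_norm_prime_eq_one (Nat.prime_of_mem_primeFactors hp)
  filter_upwards [hprimes] with ω hω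
  rw [hf.eq_prod_pow_factorization ω hn subset_rfl fun p hp =>
    (Nat.prime_of_mem_primeFactors hp).ne_zero, norm_prod]
  exact Finset.prod_eq_one fun p hp => by rw [norm_pow, hω p hp, one_pow]

theorem memLp (hf : IsSteinhausRMF μ f) {n : ℕ} (hn : n ≠ 0) (q : ENNReal) :
    MemLp (fun ω => f ω n) q μ :=
  have := hf.indep.isProbabilityMeasure
  .of_bound (hf.meas n).aestronglyMeasurable 1 ((hf.ae_norm_eq_one hn).mono fun _ h => h.le)

theorem integral_prime_pow_mul_conj_pow_of_ne (hf : IsSteinhausRMF μ f) {p : ℕ} (hp : p.Prime)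
    {α β : ℕ} (h : α ≠ β) : ∫ ω, f ω p ^ α * conj (f ω p) ^ β ∂μ = 0 := by
  have hpow : Continuous fun z : ℂ => z ^ α * conj z ^ β := by fun_prop
  have hexp : Measurable fun θ : ℝ => Complex.exp (2 * π * θ * Complex.I) := by fun_prop
  rw [← integral_map (hf.meas p).aemeasurable (f := fun z : ℂ => z ^ α * conj z ^ β)
      hpow.aestronglyMeasurable, hf.unif p hp,
    integral_map hexp.aemeasurable hpow.aestronglyMeasurable,
    ← intervalIntegral.integral_of_le zero_le_one, integral_exp_pow_mul_conj_exp_pow_of_ne h]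

theorem integral_mul_conj_self (hf : IsSteinhausRMF μ f) {n : ℕ} (hn : n ≠ 0) :
    ∫ ω, f ω n * conj (f ω n) ∂μ = 1 := by
  have := hf.indep.isProbabilityMeasure
  have hone : (fun ω => f ω n * conj (f ω n)) =ᵐ[μ] fun _ => 1 := by
    filter_upwards [hf.ae_norm_eq_one hn] with ω hω
    simp [Complex.mul_conj', hω]
  simp [integral_congr_ae hone]

theorem integral_prod_primes_comp (hf : IsSteinhausRMF μ f) {s : Finset ℕ}
    (hs : ∀ p ∈ s, p.Prime) {g : ℕ → ℂ → ℂ} (hg : ∀ p ∈ s, Measurable (g p)) :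
    ∫ ω, ∏ p ∈ s, g p (f ω p) ∂μ = ∏ p ∈ s, ∫ ω, g p (f ω p) ∂μ := by
  have hindep : iIndepFun (fun (p : s) ω => f ω p) μ :=
    hf.indep.precomp (g := fun p : s => (⟨p, hs p p.2⟩ : Nat.Primes)) fun _ _ h =>
      Subtype.ext (Subtype.mk.inj h)
  simp_rw [← Finset.prod_coe_sort s]
  exact hindep.integral_fun_prod_comp (fun p => (hf.meas p).aemeasurable)
    fun p => (hg p p.2).aestronglyMeasurable

theorem integral_mul_conj_of_ne (hf : IsSteinhausRMF μ f) {k l : ℕ} (hk : k ≠ 0) (hl : l ≠ 0)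
    (hkl : k ≠ l) : ∫ ω, f ω k * conj (f ω l) ∂μ = 0 := by
  set s := k.primeFactors ∪ l.primeFactors
  have hs : ∀ p ∈ s, p.Prime := fun p hp =>
    (Finset.mem_union.mp hp).elim Nat.prime_of_mem_primeFactors Nat.prime_of_mem_primeFactors
  obtain ⟨p, hp⟩ : ∃ p, k.factorization p ≠ l.factorization p := by
    contrapose! hkl
    exact Nat.eq_of_factorization_eq hk hl hkl
  have hps : p ∈ s := by
    contrapose! hp
    simp only [s, Finset.mem_union, not_or, ← Nat.support_factorization,
      Finsupp.notMem_support_iff] at hp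
    rw [hp.1, hp.2]
  have hfactor : ∀ ω, f ω k * conj (f ω l) =
      ∏ q ∈ s, f ω q ^ k.factorization q * conj (f ω q) ^ l.factorization q := by
    intro ω
    rw [hf.eq_prod_pow_factorization ω hk Finset.subset_union_left fun q hq => (hs q hq).ne_zero,
      hf.eq_prod_pow_factorization ω hl Finset.subset_union_right fun q hq => (hs q hq).ne_zero,
      map_prod, ← Finset.prod_mul_distrib]
    simp only [map_pow, s]
  simp_rw [hfactor]
  rw [hf.integral_prod_primes_comp hs
    (g := fun q z => z ^ k.factorization q * conj z ^ l.factorization q) fun q _ => by fun_prop]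
  exact Finset.prod_eq_zero hps (hf.integral_prime_pow_mul_conj_pow_of_ne (hs p hps) hp)

theorem integral_norm_sum_sq (hf : IsSteinhausRMF μ f) {T : Finset ℕ} (hT : ∀ k ∈ T, k ≠ 0)
    (b : ℕ → ℂ) : ∫ ω, ‖∑ k ∈ T, b k * f ω k‖ ^ 2 ∂μ = ∑ k ∈ T, ‖b k‖ ^ 2 := by
  refine integral_norm_sum_sq_of_orthonormal (fun k hk => hf.memLp (hT k hk) 2)
    (fun k hk l hl => ?_) b
  split_ifs with hkl
  · exact hkl ▸ hf.integral_mul_conj_self (hT k hk)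
  · exact hf.integral_mul_conj_of_ne (hT k hk) (hT l hl) hkl

end IsSteinhausRMF

end Orthonormality

theorem hypercontractive_steinhaus_general {Ω : Type*} [MeasurableSpace Ω] {μ : Measure Ω}
    {f : Ω → ℕ → ℂ} (hf : IsSteinhausRMF μ f) (a : ℕ → ℂ) {s : Finset ℕ} (hs : 0 ∉ s) (m : ℕ) :
    ∫ ω, ‖∑ n ∈ s, a n * f ω n‖ ^ (2 * m) ∂μ ≤ (∑ n ∈ s, ‖a n‖ ^ 2 * (dFold m n : ℝ)) ^ m := by
  have hpow : ∀ ω, ‖∑ n ∈ s, a n * f ω n‖ ^ (2 * m) =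
      ‖∑ k ∈ productSet s m, dirichletPowCoeff s a m k * f ω k‖ ^ 2 := by
    intro ω
    rw [mul_comm, pow_mul, ← norm_pow, sum_pow_eq_sum_dirichletPowCoeff s a (f ω) m fun v hv =>
      hf.map_prod ω Finset.univ fun i _ => ne_zero_of_mem_piFinset hs hv i]
  calc ∫ ω, ‖∑ n ∈ s, a n * f ω n‖ ^ (2 * m) ∂μ
      = ∫ ω, ‖∑ k ∈ productSet s m, dirichletPowCoeff s a m k * f ω k‖ ^ 2 ∂μ := by simp_rw [hpow]
    _ = ∑ k ∈ productSet s m, ‖dirichletPowCoeff s a m k‖ ^ 2 :=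
        hf.integral_norm_sum_sq (fun _ hk => ne_zero_of_mem_productSet hs hk) _
    _ ≤ (∑ n ∈ s, ‖a n‖ ^ 2 * (dFold m n : ℝ)) ^ m := sum_norm_dirichletPowCoeff_sq_le hs a m

/-- Hypercontractive inequality, Steinhaus case:
`E[|∑_{n ≥ 1} aₙ f(n)|^{2m}] ≤ (∑_{n ≥ 1} |aₙ|² d_{2m-1}(n))^m`
for finitely supported sequences `(aₙ)_{n ≥ 1}` of complex numbers. -/
theorem hypercontractive_steinhaus
    {Ω : Type*} [MeasurableSpace Ω] (μ : Measure Ω) [IsProbabilityMeasure μ]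
    (f : Ω → ℕ → ℂ) (hf : IsSteinhausRMF μ f)
    (a : ℕ → ℂ) (N : ℕ) (m : ℕ) (hm : 1 ≤ m) :
    ∫ ω, ‖∑ n ∈ Finset.Icc 1 N, a n * f ω n‖ ^ (2 * m) ∂μ ≤
      (∑ n ∈ Finset.Icc 1 N, ‖a n‖ ^ 2 * (dFold (2 * m - 1) n : ℝ)) ^ m := by
  refine (hypercontractive_steinhaus_general hf a (by simp) m).trans ?_
  gcongr with n hn
  exact dFold_mono_left (Nat.one_le_iff_ne_zero.mp (Finset.mem_Icc.mp hn).1) (by omega)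
end
end

section
/- (Parseval's identity for Dirichlet series.) Let (a_n)_{n ≥ 1} be a sequence of complex numbers, let A(s) := ∑_{n ≥ 1} a_n n^{−s} denote the corresponding Dirichlet series, and let σ_c be its abscissa of convergence. Then for any σ > max{0, σ_c}, ∫_0^{+∞} |∑_{n ≤ x} a_n|² x^{−1−2σ} dx = (1/(2π)) ∫_{−∞}^{+∞} |A(σ+it)/(σ+it)|² dt. -/
open Filter

noncomputable section

/-!
Convergence of `∑ a n * n ^ (-r)` at some `0 < r < σ` bounds the summatory function
`A x = ∑ n ≤ x, a n` by `O(x ^ r)`. Summation by parts then gives, for `r < re s`, that the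
Dirichlet series at `s` equals `s * ∫ x in Ioi 0, A x * x ^ (-s - 1)`: divided by `s`, it is the
Mellin transform of `A` at `-s`. Under `x = exp (-u)` the Mellin transform on the vertical line
through `-σ` becomes the Fourier transform of `exp (σ * u) * A (exp (-u))`, a function in
`L¹ ∩ L²`, and the identity is Plancherel's theorem for that function.
-/

section Plancherel

open MeasureTheory FourierTransform SchwartzMap

theorem norm_sq_Lp_two_eq_integral {α E : Type*} [MeasurableSpace α] {μ : Measure α}
    [NormedAddCommGroup E] (f : Lp E 2 μ) : ‖f‖ ^ 2 = ∫ x, ‖f x‖ ^ 2 ∂μ := by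
  have hf := Lp.aestronglyMeasurable f
  rw [Lp.norm_def, toReal_eLpNorm hf, lpNorm_eq_integral_norm_rpow_toReal (by simp) (by simp) hf,
    ← Real.rpow_mul_natCast (by positivity)]
  simp

variable {V E : Type*} [NormedAddCommGroup V] [InnerProductSpace ℝ V] [FiniteDimensional ℝ V]
  [MeasurableSpace V] [BorelSpace V] [NormedAddCommGroup E]

theorem integral_fourier_smul_eq_integral_smul_fourier [NormedSpace ℂ E] [CompleteSpace E]
    {φ : V → ℂ} {f : V → E} (hφ : Integrable φ) (hf : Integrable f) :
    ∫ ξ, 𝓕 φ ξ • f ξ = ∫ x, φ x • 𝓕 f x := by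
  simpa [flip_innerₗ] using! VectorFourier.integral_fourierIntegral_smul_eq_flip (L := innerₗ V)
    Real.continuous_fourierChar continuous_inner hφ hf

variable [InnerProductSpace ℂ E] [CompleteSpace E]

theorem integral_fourier_smul_eq_integral_smul_fourier_Lp (φ : 𝓢(V, ℂ))
    (f : Lp E 2 (volume : Measure V)) :
    ∫ ξ, 𝓕 φ ξ • f ξ = ∫ x, φ x • (𝓕 f : Lp E 2 (volume : Measure V)) x := by
  simpa [TemperedDistribution.fourier_apply, Lp.toTemperedDistribution_apply] using
    congrArg (fun T => T φ) (Lp.fourier_toTemperedDistribution_eq f)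

theorem fourier_toLp_ae_eq {f : V → E} (hf : Integrable f) (hf₂ : MemLp f 2) :
    (𝓕 (hf₂.toLp f) : Lp E 2 (volume : Measure V)) =ᵐ[volume] 𝓕 f := by
  have hcont : Continuous (𝓕 f) :=
    VectorFourier.fourierIntegral_continuous (L := innerₗ V) Real.continuous_fourierChar
      continuous_inner hf
  -- Both sides represent the Fourier transform of `f` as a tempered distribution.
  refine ae_eq_of_integral_contDiff_smul_eq ((Lp.memLp _).locallyIntegrable (by norm_num))
    hcont.locallyIntegrable fun g hg hgs => ?_
  let φ : 𝓢(V, ℂ) := (hgs.comp_left (g := Complex.ofReal) Complex.ofReal_zero).toSchwartzMap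
    (Complex.ofRealCLM.contDiff.comp hg)
  have hφ (x : V) (y : E) : g x • y = φ x • y := (Complex.coe_smul (g x) y).symm
  calc ∫ x, g x • (𝓕 (hf₂.toLp f) : Lp E 2 (volume : Measure V)) x
      = ∫ x, 𝓕 φ x • hf₂.toLp f x := by
        simp only [hφ, integral_fourier_smul_eq_integral_smul_fourier_Lp]
    _ = ∫ x, 𝓕 φ x • f x :=
        integral_congr_ae <| hf₂.coeFn_toLp.mono fun x hx => congrArg (𝓕 φ x • ·) hx
    _ = ∫ x, g x • 𝓕 f x := by
        simp only [hφ, fourier_coe, integral_fourier_smul_eq_integral_smul_fourier φ.integrable hf]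

theorem integral_norm_sq_fourier_of_memLp {f : V → E} (hf : Integrable f) (hf₂ : MemLp f 2) :
    ∫ ξ, ‖𝓕 f ξ‖ ^ 2 = ∫ x, ‖f x‖ ^ 2 :=
  calc ∫ ξ, ‖𝓕 f ξ‖ ^ 2 = ∫ ξ, ‖(𝓕 (hf₂.toLp f) : Lp E 2 (volume : Measure V)) ξ‖ ^ 2 :=
        integral_congr_ae <| (fourier_toLp_ae_eq hf hf₂).mono fun ξ hξ => by simp only [hξ]
    _ = ∫ x, ‖hf₂.toLp f x‖ ^ 2 := by
        rw [← norm_sq_Lp_two_eq_integral, Lp.norm_fourier_eq, norm_sq_Lp_two_eq_integral]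
    _ = ∫ x, ‖f x‖ ^ 2 :=
        integral_congr_ae <| hf₂.coeFn_toLp.mono fun x hx => by simp only [hx]

end Plancherel

section Mellin

open MeasureTheory FourierTransform Set Real

variable {E : Type*} [NormedAddCommGroup E]

theorem range_exp_neg : range (fun u : ℝ => exp (-u)) = Ioi 0 :=
  (neg_surjective.range_comp exp).trans range_exp

theorem hasDerivAt_exp_neg (u : ℝ) : HasDerivAt (fun u : ℝ => exp (-u)) (-exp (-u)) u := by
  simpa using (hasDerivAt_neg u).exp

theorem exp_neg_injective : Function.Injective (fun u : ℝ => exp (-u)) :=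
  exp_injective.comp neg_injective

theorem integrableOn_Ioi_iff_integrable_exp_neg [NormedSpace ℝ E] (f : ℝ → E) :
    IntegrableOn f (Ioi 0) ↔ Integrable fun u => exp (-u) • f (exp (-u)) := by
  rw [← range_exp_neg, ← image_univ, integrableOn_image_iff_integrableOn_abs_deriv_smul
    MeasurableSet.univ (fun u _ => (hasDerivAt_exp_neg u).hasDerivWithinAt)
    exp_neg_injective.injOn]
  simp

theorem integral_Ioi_eq_integral_exp_neg [NormedSpace ℝ E] (f : ℝ → E) :
    ∫ x in Ioi 0, f x = ∫ u, exp (-u) • f (exp (-u)) := by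
  rw [← range_exp_neg, ← image_univ, integral_image_eq_integral_abs_deriv_smul
    MeasurableSet.univ (fun u _ => (hasDerivAt_exp_neg u).hasDerivWithinAt)
    exp_neg_injective.injOn]
  simp

theorem integrable_exp_smul_comp_exp_neg [NormedSpace ℂ E] {f : ℝ → E} {σ : ℝ}
    (hf : MellinConvergent f σ) : Integrable fun u => exp (-σ * u) • f (exp (-u)) := by
  refine ((integrableOn_Ioi_iff_integrable_exp_neg _).1 hf).congr (.of_forall fun u => ?_)
  have hpow : (exp (-u) : ℂ) ^ ((σ : ℂ) - 1) = (exp (-u * (σ - 1)) : ℝ) := by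
    rw [exp_mul, Complex.ofReal_cpow (exp_pos _).le]
    norm_cast
  simp only [hpow, Complex.coe_smul, smul_smul, ← exp_add]
  ring_nf

theorem exp_neg_smul_norm_sq [NormedSpace ℝ E] (f : ℝ → E) (σ u : ℝ) :
    exp (-u) • (exp (-u) ^ (2 * σ - 1) * ‖f (exp (-u))‖ ^ 2) =
      ‖exp (-σ * u) • f (exp (-u))‖ ^ 2 := by
  rw [norm_smul, mul_pow, norm_of_nonneg (exp_pos _).le, ← exp_nat_mul, ← exp_mul, smul_eq_mul,
    ← mul_assoc, ← exp_add]
  push_cast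
  ring_nf

theorem integral_norm_sq_mellin [InnerProductSpace ℂ E] [CompleteSpace E] {f : ℝ → E} {σ : ℝ}
    (hf : MellinConvergent f σ)
    (hf₂ : IntegrableOn (fun x => x ^ (2 * σ - 1) * ‖f x‖ ^ 2) (Ioi 0)) :
    ∫ x in Ioi 0, x ^ (2 * σ - 1) * ‖f x‖ ^ 2 =
      (1 / (2 * π)) * ∫ t : ℝ, ‖mellin f (σ + t * Complex.I)‖ ^ 2 := by
  set g : ℝ → E := fun u => exp (-σ * u) • f (exp (-u)) with hg
  have hg₁ : Integrable g := integrable_exp_smul_comp_exp_neg hf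
  have hg₂ : MemLp g 2 := by
    rw [memLp_two_iff_integrable_sq_norm hg₁.aestronglyMeasurable]
    simpa only [exp_neg_smul_norm_sq] using (integrableOn_Ioi_iff_integrable_exp_neg _).1 hf₂
  calc ∫ x in Ioi 0, x ^ (2 * σ - 1) * ‖f x‖ ^ 2 = ∫ u, ‖g u‖ ^ 2 := by
        simp only [integral_Ioi_eq_integral_exp_neg, exp_neg_smul_norm_sq, hg]
    _ = ∫ ξ, ‖𝓕 g ξ‖ ^ 2 := (integral_norm_sq_fourier_of_memLp hg₁ hg₂).symm
    _ = (1 / (2 * π)) * ∫ t : ℝ, ‖𝓕 g (t / (2 * π))‖ ^ 2 := by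
        rw [Measure.integral_comp_div (fun ξ => ‖𝓕 g ξ‖ ^ 2), smul_eq_mul,
          abs_of_pos two_pi_pos, ← mul_assoc, one_div_mul_cancel two_pi_pos.ne', one_mul]
    _ = (1 / (2 * π)) * ∫ t : ℝ, ‖mellin f (σ + t * Complex.I)‖ ^ 2 := by
        simp [mellin_eq_fourier, hg]

end Mellin

section SummationByParts

open Finset

theorem sum_Icc_smul_eq_smul_sum_sub {R M : Type*} [Ring R] [AddCommGroup M] [Module R M]
    (c : ℕ → R) (a : ℕ → M) (N : ℕ) :
    ∑ n ∈ Icc 1 N, c n • a n = c N • ∑ n ∈ Icc 1 N, a n -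
      ∑ k ∈ range N, (c (k + 1) - c k) • ∑ n ∈ Icc 1 k, a n := by
  induction N with
  | zero => simp
  | succ N ih =>
    rw [sum_Icc_succ_top (by lia), ih, sum_Icc_succ_top (by lia), sum_range_succ, sub_smul,
      smul_add]
    abel

theorem norm_sum_Icc_smul_le_of_monotone {E : Type*} [SeminormedAddCommGroup E] [NormedSpace ℝ E]
    {c : ℕ → ℝ} {b : ℕ → E} {M : ℝ} (hc : Monotone c) (hc₀ : 0 ≤ c 0)
    (hb : ∀ N, ‖∑ n ∈ Icc 1 N, b n‖ ≤ M) (N : ℕ) :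
    ‖∑ n ∈ Icc 1 N, c n • b n‖ ≤ 2 * M * c N := by
  have hM : 0 ≤ M := (norm_nonneg _).trans (hb 0)
  have hcN : 0 ≤ c N := hc₀.trans (hc N.zero_le)
  rw [sum_Icc_smul_eq_smul_sum_sub]
  calc _ ≤ c N * M + ∑ k ∈ range N, (c (k + 1) - c k) * M := by
        refine (norm_sub_le _ _).trans (add_le_add ?_ (norm_sum_le_of_le _ fun k _ => ?_))
        · rw [norm_smul, Real.norm_of_nonneg hcN]
          exact mul_le_mul_of_nonneg_left (hb N) hcN
        · have hck : 0 ≤ c (k + 1) - c k := sub_nonneg.2 (hc k.le_succ)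
          rw [norm_smul, Real.norm_of_nonneg hck]
          exact mul_le_mul_of_nonneg_left (hb k) hck
    _ = 2 * M * c N - c 0 * M := by rw [← sum_mul, sum_range_sub]; ring
    _ ≤ 2 * M * c N := sub_le_self _ (mul_nonneg hc₀ hM)

end SummationByParts

section Summatory

open Finset Asymptotics MeasureTheory Topology

theorem locallyIntegrable_comp_natFloor {E : Type*} [NormedAddCommGroup E] (F : ℕ → E)
    (μ : Measure ℝ) [IsLocallyFiniteMeasure μ] :
    LocallyIntegrable (fun x : ℝ => F ⌊x⌋₊) μ := by
  refine locallyIntegrable_iff.2 fun K hK => ?_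
  obtain ⟨X, hX⟩ := hK.bddAbove
  refine IntegrableOn.of_bound hK.measure_lt_top
    (StronglyMeasurable.of_discrete.comp_measurable Nat.measurable_floor).aestronglyMeasurable
    (∑ k ∈ range (⌊X⌋₊ + 1), ‖F k‖) ?_
  filter_upwards [ae_restrict_mem hK.measurableSet] with x hx
  exact single_le_sum (f := fun k => ‖F k‖) (fun k _ => norm_nonneg _)
    (mem_range_succ_iff.2 (Nat.floor_mono (hX hx)))

variable {E : Type*}

/-- The summatory function `x ↦ ∑ 1 ≤ n ≤ x, a n` of a sequence; the value `a 0` is ignored. -/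
def summatory [AddCommMonoid E] (a : ℕ → E) (x : ℝ) : E := ∑ n ∈ Icc 1 ⌊x⌋₊, a n

theorem summatory_natCast [AddCommMonoid E] (a : ℕ → E) (N : ℕ) :
    summatory a (N : ℝ) = ∑ n ∈ Icc 1 N, a n := by
  simp [summatory]

theorem summatory_eq_zero_of_lt_one [AddCommMonoid E] (a : ℕ → E) {x : ℝ} (hx : x < 1) :
    summatory a x = 0 := by
  simp [summatory, Nat.floor_eq_zero.2 hx]

theorem eventually_nhdsGT_zero_summatory_eq_zero [AddCommMonoid E] (a : ℕ → E) :
    ∀ᶠ x in 𝓝[>] 0, summatory a x = 0 :=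
  eventually_nhdsWithin_of_eventually_nhds <|
    (eventually_lt_nhds one_pos).mono fun _ => summatory_eq_zero_of_lt_one a

theorem isBigO_summatory_of_bounded_rpow_smul [SeminormedAddCommGroup E] [NormedSpace ℝ E]
    {a : ℕ → E} {r M : ℝ} (hr : 0 ≤ r)
    (h : ∀ N : ℕ, ‖∑ n ∈ Icc 1 N, (n : ℝ) ^ (-r) • a n‖ ≤ M) :
    summatory a =O[atTop] fun x => x ^ r := by
  have hM : 0 ≤ M := (norm_nonneg _).trans (h 0)
  have hmono : Monotone fun n : ℕ => (n : ℝ) ^ r := fun m n hmn => by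
    dsimp only
    gcongr
  refine IsBigO.of_bound (2 * M) ?_
  filter_upwards [eventually_ge_atTop 0] with x hx
  calc ‖summatory a x‖ = ‖∑ n ∈ Icc 1 ⌊x⌋₊, (n : ℝ) ^ r • (n : ℝ) ^ (-r) • a n‖ := by
        refine congrArg norm (sum_congr rfl fun n hn => ?_)
        have hn' : (0 : ℝ) < n := by exact_mod_cast (mem_Icc.1 hn).1
        rw [smul_smul, ← Real.rpow_add hn', add_neg_cancel, Real.rpow_zero, one_smul]
    _ ≤ 2 * M * (⌊x⌋₊ : ℝ) ^ r :=
        norm_sum_Icc_smul_le_of_monotone hmono (by positivity) h ⌊x⌋₊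
    _ ≤ 2 * M * ‖x ^ r‖ := by
        rw [Real.norm_of_nonneg (by positivity)]
        gcongr
        exact Nat.floor_le hx

theorem exists_isBigO_summatory_rpow {a : ℕ → ℂ} {σ' σ : ℝ} (hσ : max 0 σ' < σ)
    (hconv : ∀ r : ℝ, σ' < r → ∃ L : ℂ,
      Tendsto (fun N : ℕ => ∑ n ∈ Icc 1 N, a n / (n : ℂ) ^ (r : ℂ)) atTop (𝓝 L)) :
    ∃ r < σ, summatory a =O[atTop] fun x => x ^ r := by
  obtain ⟨r, hr, hrσ⟩ := exists_between hσ
  obtain ⟨hr₀, hσ'r⟩ := max_lt_iff.1 hr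
  obtain ⟨L, hL⟩ := hconv r hσ'r
  obtain ⟨M, hM⟩ := hL.norm.bddAbove_range
  refine ⟨r, hrσ, isBigO_summatory_of_bounded_rpow_smul (M := M) hr₀.le fun N => ?_⟩
  simpa [Complex.ofReal_cpow, Real.rpow_neg, div_eq_inv_mul] using hM ⟨N, rfl⟩

variable [NormedAddCommGroup E]

theorem locallyIntegrable_summatory (a : ℕ → E) : LocallyIntegrable (summatory a) :=
  locallyIntegrable_comp_natFloor (fun N => ∑ n ∈ Icc 1 N, a n) volume

theorem locallyIntegrable_norm_sq_summatory (a : ℕ → E) :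
    LocallyIntegrable fun x => ‖summatory a x‖ ^ 2 :=
  locallyIntegrable_comp_natFloor (fun N => ‖∑ n ∈ Icc 1 N, a n‖ ^ 2) volume

variable {a : ℕ → E} {r : ℝ}

theorem mellinConvergent_summatory [NormedSpace ℂ E] {s : ℂ}
    (hO : summatory a =O[atTop] fun x => x ^ r) (hs : s.re < -r) :
    MellinConvergent (summatory a) s := by
  have hzero : summatory a =ᶠ[𝓝[>] 0] 0 := eventually_nhdsGT_zero_summatory_eq_zero a
  exact mellinConvergent_of_isBigO_rpow ((locallyIntegrable_summatory a).locallyIntegrableOn _)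
    (by simpa using hO) hs (hzero.trans_isBigO (isBigO_zero _ _)) (sub_one_lt s.re)

theorem integrableOn_rpow_mul_norm_sq_summatory {s : ℝ}
    (hO : summatory a =O[atTop] fun x => x ^ r) (hs : s < -(2 * r)) :
    IntegrableOn (fun x => x ^ (s - 1) * ‖summatory a x‖ ^ 2) (Set.Ioi 0) := by
  have hzero : (fun x => ‖summatory a x‖ ^ 2) =ᶠ[𝓝[>] 0] 0 :=
    (eventually_nhdsGT_zero_summatory_eq_zero a).mono fun x hx => by simp [hx]
  have hO₂ : (fun x => ‖summatory a x‖ ^ 2) =O[atTop] fun x => x ^ (2 * r) := by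
    refine (hO.norm_left.pow 2).congr' .rfl ?_
    filter_upwards [eventually_ge_atTop 0] with x hx
    rw [← Real.rpow_mul_natCast hx, mul_comm, Nat.cast_two]
  exact mellin_convergent_of_isBigO_scalar
    ((locallyIntegrable_norm_sq_summatory a).locallyIntegrableOn _)
    (by simpa using hO₂) hs (hzero.trans_isBigO (isBigO_zero _ _)) (sub_one_lt s)

variable [NormedSpace ℂ E]

theorem cpow_smul_summatory_eqOn_Ioo (a : ℕ → E) (w : ℂ) (k : ℕ) :
    Set.EqOn (fun x : ℝ => (x : ℂ) ^ w • ∑ n ∈ Icc 1 k, a n)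
      (fun x : ℝ => (x : ℂ) ^ w • summatory a x) (Set.Ioo k (k + 1)) := fun x hx => by
  simp only [summatory, (Nat.floor_eq_iff (k.cast_nonneg.trans hx.1.le)).2 ⟨hx.1.le, hx.2⟩]

theorem intervalIntegrable_cpow_smul_summatory_succ (a : ℕ → E) (w : ℂ) (k : ℕ) :
    IntervalIntegrable (fun x : ℝ => (x : ℂ) ^ w • summatory a x) volume k (k + 1) := by
  have hk : (k : ℝ) ≤ k + 1 := by linarith
  refine IntervalIntegrable.congr_uIoo ?_
    (by simpa only [Set.uIoo_of_le hk] using cpow_smul_summatory_eqOn_Ioo a w k)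
  rcases k.eq_zero_or_pos with rfl | hk₀
  · simp
  · have h₀ : (0 : ℝ) ∉ Set.uIcc (k : ℝ) (k + 1) :=
      Set.notMem_uIcc_of_lt (by simpa) (by positivity)
    have hint : IntervalIntegrable (fun x : ℝ => (x : ℂ) ^ w) volume k (k + 1) :=
      intervalIntegral.intervalIntegrable_cpow (.inr h₀)
    exact ⟨hint.1.smul_const _, hint.2.smul_const _⟩

theorem tendsto_cpow_neg_smul_summatory {s : ℂ} (hO : summatory a =O[atTop] fun x => x ^ r)
    (hs : r < s.re) :
    Tendsto (fun N : ℕ => (N : ℂ) ^ (-s) • summatory a N) atTop (𝓝 0) := by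
  have hpow : (fun x : ℝ => (x : ℂ) ^ (-s)) =O[atTop] fun x => x ^ (-s.re) :=
    isBigO_norm_left.1 (Complex.norm_ofReal_cpow_eventually_eq_atTop (-s)).isBigO
  have hO' : (fun x : ℝ => (x : ℂ) ^ (-s) • summatory a x) =O[atTop]
      fun x => x ^ (-(s.re - r)) := by
    refine (hpow.smul hO).congr' .rfl ?_
    filter_upwards [eventually_gt_atTop 0] with x hx
    rw [smul_eq_mul, ← Real.rpow_add hx, neg_sub, neg_add_eq_sub]
  simpa [Function.comp_def] using (hO'.trans_tendsto (tendsto_rpow_neg_atTop (sub_pos.2 hs))).comp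
    tendsto_natCast_atTop_atTop

variable [CompleteSpace E]

theorem smul_integral_cpow_smul_summatory_succ (a : ℕ → E) (s : ℂ) (k : ℕ) :
    s • ∫ x : ℝ in k..(k + 1), (x : ℂ) ^ (-s - 1) • summatory a x =
      ((k : ℂ) ^ (-s) - ((k + 1 : ℕ) : ℂ) ^ (-s)) • ∑ n ∈ Icc 1 k, a n := by
  have hk : (k : ℝ) ≤ k + 1 := by linarith
  rw [← intervalIntegral.integral_congr_Ioo_of_le hk
    (cpow_smul_summatory_eqOn_Ioo a (-s - 1) k), intervalIntegral.integral_smul_const, smul_smul]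
  rcases k.eq_zero_or_pos with rfl | hk₀
  · simp
  rcases eq_or_ne s 0 with rfl | hs
  · simp
  have h₀ : (0 : ℝ) ∉ Set.uIcc (k : ℝ) (k + 1) := Set.notMem_uIcc_of_lt (by simpa) (by positivity)
  have hs₁ : -s - 1 ≠ -1 := by simpa [sub_eq_iff_eq_add] using hs
  rw [integral_cpow (.inr ⟨hs₁, h₀⟩), sub_add_cancel, div_neg, mul_neg, mul_div_cancel₀ _ hs,
    neg_sub]
  push_cast
  rfl

theorem sum_cpow_neg_smul_eq (a : ℕ → E) (s : ℂ) (N : ℕ) :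
    ∑ n ∈ Icc 1 N, (n : ℂ) ^ (-s) • a n = (N : ℂ) ^ (-s) • summatory a N +
      s • ∫ x : ℝ in 0..N, (x : ℂ) ^ (-s - 1) • summatory a x := by
  have hint := intervalIntegral.sum_integral_adjacent_intervals (a := fun k : ℕ => (k : ℝ)) (n := N)
    fun k _ => by simpa using intervalIntegrable_cpow_smul_summatory_succ a (-s - 1) k
  rw [Nat.cast_zero] at hint
  rw [sum_Icc_smul_eq_smul_sum_sub (fun n : ℕ => (n : ℂ) ^ (-s)), ← hint, summatory_natCast,
    sub_eq_add_neg, smul_sum (r := s), ← sum_neg_distrib]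
  congr 1
  refine sum_congr rfl fun k _ => ?_
  rw [Nat.cast_succ (R := ℝ), smul_integral_cpow_smul_summatory_succ, ← neg_smul, neg_sub]

theorem tendsto_sum_cpow_neg_smul {s : ℂ} (hO : summatory a =O[atTop] fun x => x ^ r)
    (hs : r < s.re) :
    Tendsto (fun N : ℕ => ∑ n ∈ Icc 1 N, (n : ℂ) ^ (-s) • a n) atTop
      (𝓝 (s • mellin (summatory a) (-s))) := by
  have hint := intervalIntegral_tendsto_integral_Ioi 0
    (mellinConvergent_summatory (s := -s) hO (by simpa using hs)) tendsto_natCast_atTop_atTop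
  simpa only [sum_cpow_neg_smul_eq, zero_add, mellin] using
    (tendsto_cpow_neg_smul_summatory hO hs).add (hint.const_smul s)

end Summatory

section Parseval

open Finset Asymptotics MeasureTheory

variable {E : Type*} [NormedAddCommGroup E] [InnerProductSpace ℂ E] [CompleteSpace E]

theorem parseval_dirichlet_series_general (a : ℕ → E) {r σ : ℝ}
    (hO : summatory a =O[atTop] fun x => x ^ r) (hσ : r < σ) :
    ∫ x in Set.Ioi 0, ‖summatory a x‖ ^ 2 / x ^ (1 + 2 * σ) =
      (1 / (2 * Real.pi)) * ∫ t : ℝ, ‖((σ : ℂ) + t * Complex.I)⁻¹ • limUnder atTop fun N : ℕ =>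
        ∑ n ∈ Icc 1 N, (n : ℂ) ^ (-((σ : ℂ) + t * Complex.I)) • a n‖ ^ 2 := by
  have hmellin : MellinConvergent (summatory a) (-σ : ℝ) :=
    mellinConvergent_summatory hO (by simpa using hσ)
  have hL₂ := integrableOn_rpow_mul_norm_sq_summatory (s := 2 * -σ) hO (by linarith)
  calc ∫ x in Set.Ioi 0, ‖summatory a x‖ ^ 2 / x ^ (1 + 2 * σ)
      = ∫ x in Set.Ioi 0, x ^ (2 * -σ - 1) * ‖summatory a x‖ ^ 2 :=
        setIntegral_congr_fun measurableSet_Ioi fun x hx => by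
          have hexp : 2 * -σ - 1 = -(1 + 2 * σ) := by ring
          simp only [hexp, Real.rpow_neg (Set.mem_Ioi.1 hx).le, div_eq_inv_mul]
    _ = (1 / (2 * Real.pi)) *
          ∫ t : ℝ, ‖mellin (summatory a) (-((σ : ℂ) + t * Complex.I))‖ ^ 2 := by
        rw [integral_norm_sq_mellin hmellin hL₂, ← integral_neg_eq_self]
        simp [add_comm]
    _ = _ := by
        refine congrArg _ (integral_congr_ae ?_)
        -- For `σ = 0` the inverse takes its junk value at `t = 0`.
        filter_upwards [Measure.ae_ne volume 0] with t ht
        have hs₀ : (σ : ℂ) + t * Complex.I ≠ 0 := fun h => ht (by simpa using congrArg Complex.im h)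
        rw [(tendsto_sum_cpow_neg_smul hO (by simpa using hσ)).limUnder_eq, inv_smul_smul₀ hs₀]

end Parseval

/-- Parseval's identity for Dirichlet series: if `σ > max{0, σ_c}`, where `σ_c` is the
abscissa of convergence of `A(s) = ∑_{n ≥ 1} aₙ n^{-s}`, then
`∫_0^∞ |∑_{n ≤ x} aₙ|² x^{-1-2σ} dx = (1/(2π)) ∫_ℝ |A(σ+it)/(σ+it)|² dt`. -/
theorem parseval_dirichlet_series (a : ℕ → ℂ) (σ : ℝ) (hσ : 0 < σ)
    (hconv : ∃ σ' : ℝ, σ' < σ ∧ ∀ s : ℂ, σ' < s.re →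
      ∃ L : ℂ, Tendsto (fun N : ℕ => ∑ n ∈ Finset.Icc 1 N, a n / (n : ℂ) ^ s) atTop (nhds L)) :
    (∫ x in Set.Ioi (0 : ℝ), ‖∑ n ∈ Finset.Icc 1 ⌊x⌋₊, a n‖ ^ 2 / x ^ (1 + 2 * σ)) =
      (1 / (2 * Real.pi)) * ∫ t : ℝ,
        ‖(limUnder atTop fun N : ℕ =>
            ∑ n ∈ Finset.Icc 1 N, a n / (n : ℂ) ^ ((σ : ℂ) + (t : ℂ) * Complex.I)) /
          ((σ : ℂ) + (t : ℂ) * Complex.I)‖ ^ 2 := by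
  obtain ⟨σ', hσ', hconv⟩ := hconv
  obtain ⟨r, hrσ, hO⟩ := exists_isBigO_summatory_rpow (max_lt hσ hσ') fun r hr =>
    hconv r (by simpa using hr)
  simpa only [summatory, Complex.cpow_neg, div_eq_inv_mul, smul_eq_mul] using
    parseval_dirichlet_series_general a hO hrσ
end
end

section
/- (Euler product result, Steinhaus case.) Let f be a Steinhaus random multiplicative function. For any real number t and any real numbers 2 ≤ x ≤ y, one has E[∏_{x < p ≤ y, p prime} |1 − f(p)·p^{−1/2−it}|^{−2}] = ∏_{x < p ≤ y, p prime} (1 − 1/p)^{−1}. -/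
open MeasureTheory ProbabilityTheory Real

noncomputable section

/-!
The factors of the product are independent, so the expectation factors over the primes. For `X`
uniform on the unit circle and `|a| < 1`, the substitution `z ↦ z⁻¹` turns `|1 - z a|⁻²` into
`|z - a|⁻²`, which on the circle is the Poisson kernel of `a` divided by `1 - |a|²`; the Poisson
kernel has mean `1`, whence `E |1 - X a|⁻² = (1 - |a|²)⁻¹`. Take `a = p ^ (-s)`, `s = 1/2 + it`.
-/

/-- The uniform distribution on the unit circle: the law of `exp (2πiθ)` for `θ` uniform on
`(0, 1]`, in the parametrization used by `IsSteinhausRMF.unif`. -/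
def unitCircleMeasure : Measure ℂ :=
  Measure.map (fun θ : ℝ => Complex.exp (2 * π * θ * Complex.I))
    (volume.restrict (Set.Ioc (0 : ℝ) 1))

lemma integral_unitCircleMeasure {E : Type*} [NormedAddCommGroup E] [NormedSpace ℝ E] {g : ℂ → E}
    (hg : AEStronglyMeasurable g unitCircleMeasure) :
    ∫ z, g z ∂unitCircleMeasure = circleAverage g 0 1 := by
  calc ∫ z, g z ∂unitCircleMeasure
      = ∫ θ in (0 : ℝ)..1, g (circleMap 0 1 (2 * π * θ)) := by
        rw [unitCircleMeasure, integral_map (by fun_prop) hg,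
          intervalIntegral.integral_of_le zero_le_one]
        simp [circleMap]
    _ = circleAverage g 0 1 := by
        rw [intervalIntegral.integral_comp_mul_left (fun θ => g (circleMap 0 1 θ))
          two_pi_pos.ne', mul_zero, mul_one, circleAverage_def]

lemma circleAverage_poissonKernel {c w : ℂ} {R : ℝ} (hw : w ∈ Metric.ball c R) :
    circleAverage (poissonKernel c w) c R = 1 := by
  simpa only [smul_eq_mul, Pi.mul_def, mul_one] using
    (InnerProductSpace.harmonicContOnCl_const (c := (1 : ℝ))).circleAverage_poissonKernel_smul hw

lemma circleAverage_inv_norm_sub_sq {c w : ℂ} {R : ℝ} (hw : w ∈ Metric.ball c R) :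
    circleAverage (fun z => (‖z - w‖ ^ 2)⁻¹) c R = (R ^ 2 - ‖w - c‖ ^ 2)⁻¹ := by
  have hwR : ‖w - c‖ < R := mem_ball_iff_norm.1 hw
  have hne : R ^ 2 - ‖w - c‖ ^ 2 ≠ 0 := by nlinarith [norm_nonneg (w - c)]
  calc circleAverage (fun z => (‖z - w‖ ^ 2)⁻¹) c R
      = circleAverage (fun z => (R ^ 2 - ‖w - c‖ ^ 2)⁻¹ • poissonKernel c w z) c R := by
        refine circleAverage_congr_sphere fun z hz => ?_
        rw [mem_sphere_iff_norm] at hz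
        simp only [poissonKernel_def, hz, sq_abs, sub_sub_sub_cancel_right, smul_eq_mul]
        field_simp
    _ = (R ^ 2 - ‖w - c‖ ^ 2)⁻¹ := by
        rw [circleAverage_fun_smul, circleAverage_poissonKernel hw, smul_eq_mul, mul_one]

lemma circleAverage_inv_norm_one_sub_mul_sq {a : ℂ} (ha : ‖a‖ < 1) :
    circleAverage (fun z => (‖1 - z * a‖ ^ 2)⁻¹) 0 1 = (1 - ‖a‖ ^ 2)⁻¹ := by
  have norm_one_sub_inv_mul : ∀ z ∈ Metric.sphere (0 : ℂ) |1|, ‖1 - z⁻¹ * a‖ = ‖z - a‖ := by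
    intro z hz
    have hz1 : ‖z‖ = 1 := by simpa using hz
    have hz0 : z ≠ 0 := norm_ne_zero_iff.1 (by simp [hz1])
    rw [← one_mul ‖1 - z⁻¹ * a‖, ← hz1, ← norm_mul, mul_sub, mul_one, mul_inv_cancel_left₀ hz0]
  calc circleAverage (fun z => (‖1 - z * a‖ ^ 2)⁻¹) 0 1
      = circleAverage (fun z => (‖1 - z⁻¹ * a‖ ^ 2)⁻¹) 0 1 :=
        (circleAverage_zero_one_congr_inv (f := fun z => (‖1 - z * a‖ ^ 2)⁻¹)).symm
    _ = circleAverage (fun z => (‖z - a‖ ^ 2)⁻¹) 0 1 :=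
        circleAverage_congr_sphere fun z hz => by simp only [norm_one_sub_inv_mul z hz]
    _ = (1 - ‖a‖ ^ 2)⁻¹ := by
        simpa using circleAverage_inv_norm_sub_sq (mem_ball_zero_iff.2 ha)

section RandomEulerProduct

variable {Ω : Type*} [MeasurableSpace Ω] {μ : Measure Ω}

lemma integral_inv_norm_one_sub_mul_sq {X : Ω → ℂ} (hX : HasLaw X unitCircleMeasure μ) {a : ℂ}
    (ha : ‖a‖ < 1) :
    ∫ ω, (‖1 - X ω * a‖ ^ 2)⁻¹ ∂μ = (1 - ‖a‖ ^ 2)⁻¹ := by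
  have hmeas : AEStronglyMeasurable (fun z : ℂ => (‖1 - z * a‖ ^ 2)⁻¹) unitCircleMeasure := by
    fun_prop
  rw [← circleAverage_inv_norm_one_sub_mul_sq ha, ← integral_unitCircleMeasure hmeas]
  exact hX.integral_comp hmeas

lemma integral_prod_inv_norm_one_sub_mul_sq {ι : Type*} {X : ι → Ω → ℂ} (hindep : iIndepFun X μ)
    (hlaw : ∀ i, HasLaw (X i) unitCircleMeasure μ) (S : Finset ι) {a : ι → ℂ}
    (ha : ∀ i ∈ S, ‖a i‖ < 1) :
    ∫ ω, ∏ i ∈ S, (‖1 - X i ω * a i‖ ^ 2)⁻¹ ∂μ = ∏ i ∈ S, (1 - ‖a i‖ ^ 2)⁻¹ := by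
  have integral_prod : ∫ ω, ∏ i : S, (‖1 - X i ω * a i‖ ^ 2)⁻¹ ∂μ =
      ∏ i : S, ∫ ω, (‖1 - X i ω * a i‖ ^ 2)⁻¹ ∂μ :=
    (hindep.precomp (g := ((↑) : S → ι)) Subtype.val_injective).integral_fun_prod_comp
      (f := fun (i : S) (z : ℂ) => (‖1 - z * a i‖ ^ 2)⁻¹)
      (fun i => (hlaw i).aemeasurable) (fun i => by fun_prop)
  simp only [← Finset.prod_coe_sort S]
  rw [integral_prod]
  exact Finset.prod_congr rfl fun i _ => integral_inv_norm_one_sub_mul_sq (hlaw i) (ha i i.2)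

lemma IsSteinhausRMF.hasLaw {f : Ω → ℕ → ℂ} (hf : IsSteinhausRMF μ f) {p : ℕ} (hp : p.Prime) :
    HasLaw (fun ω => f ω p) unitCircleMeasure μ where
  aemeasurable := (hf.meas p).aemeasurable
  map_eq := hf.unif p hp

lemma sq_norm_natCast_cpow_neg {n : ℕ} (hn : 0 < n) (s : ℂ) :
    ‖(n : ℂ) ^ (-s)‖ ^ 2 = (n : ℝ) ^ (-(2 * s.re)) := by
  rw [Complex.norm_natCast_cpow_of_pos hn, ← rpow_mul_natCast n.cast_nonneg, Complex.neg_re]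
  push_cast
  ring_nf

lemma norm_natCast_cpow_neg_lt_one {n : ℕ} (hn : 1 < n) {s : ℂ} (hs : 0 < s.re) :
    ‖(n : ℂ) ^ (-s)‖ < 1 := by
  rw [Complex.norm_natCast_cpow_of_pos (zero_lt_one.trans hn)]
  exact rpow_lt_one_of_one_lt_of_neg (Nat.one_lt_cast.2 hn) (by simpa using hs)

theorem euler_product_steinhaus_general {f : Ω → ℕ → ℂ} (hf : IsSteinhausRMF μ f) {S : Finset ℕ}
    (hS : ∀ p ∈ S, p.Prime) {s : ℂ} (hs : 0 < s.re) :
    ∫ ω, ∏ p ∈ S, (‖1 - f ω p * (p : ℂ) ^ (-s)‖ ^ 2)⁻¹ ∂μ =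
      ∏ p ∈ S, (1 - (p : ℝ) ^ (-(2 * s.re)))⁻¹ := by
  have over_primes := integral_prod_inv_norm_one_sub_mul_sq hf.indep (fun p => hf.hasLaw p.2)
    (S.subtype Nat.Prime) (a := fun p => ((p : ℕ) : ℂ) ^ (-s))
    fun p _ => norm_natCast_cpow_neg_lt_one p.2.one_lt hs
  have prod_subtype (g : ℕ → ℝ) : ∏ p ∈ S.subtype Nat.Prime, g p = ∏ p ∈ S, g p :=
    Finset.prod_subtype_of_mem g hS
  calc ∫ ω, ∏ p ∈ S, (‖1 - f ω p * (p : ℂ) ^ (-s)‖ ^ 2)⁻¹ ∂μ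
      = ∫ ω, ∏ p ∈ S.subtype Nat.Prime, (‖1 - f ω p * (p : ℂ) ^ (-s)‖ ^ 2)⁻¹ ∂μ :=
        congrArg (integral μ) (funext fun ω => (prod_subtype _).symm)
    _ = ∏ p ∈ S.subtype Nat.Prime, (1 - ‖(p : ℂ) ^ (-s)‖ ^ 2)⁻¹ := over_primes
    _ = ∏ p ∈ S, (1 - ‖(p : ℂ) ^ (-s)‖ ^ 2)⁻¹ :=
        prod_subtype fun p => (1 - ‖(p : ℂ) ^ (-s)‖ ^ 2)⁻¹
    _ = ∏ p ∈ S, (1 - (p : ℝ) ^ (-(2 * s.re)))⁻¹ :=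
        Finset.prod_congr rfl fun p hp => by rw [sq_norm_natCast_cpow_neg (hS p hp).pos]

end RandomEulerProduct

/-- Euler product result, Steinhaus case:
`E[∏_{x < p ≤ y} |1 - f(p) p^{-1/2-it}|⁻²] = ∏_{x < p ≤ y} (1 - 1/p)⁻¹`. -/
theorem euler_product_steinhaus
    {Ω : Type*} [MeasurableSpace Ω] (μ : Measure Ω) [IsProbabilityMeasure μ]
    (f : Ω → ℕ → ℂ) (hf : IsSteinhausRMF μ f)
    (t : ℝ) (x y : ℝ) (hx : 2 ≤ x) (hxy : x ≤ y) :
    ∫ ω, ∏ p ∈ (Finset.Icc 1 ⌊y⌋₊).filter (fun p : ℕ => Nat.Prime p ∧ x < (p : ℝ)),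
        (‖1 - f ω p * (p : ℂ) ^ (-(1 / 2 : ℂ) - (t : ℂ) * Complex.I)‖ ^ 2)⁻¹ ∂μ =
      ∏ p ∈ (Finset.Icc 1 ⌊y⌋₊).filter (fun p : ℕ => Nat.Prime p ∧ x < (p : ℝ)),
        (1 - 1 / (p : ℝ))⁻¹ := by
  simpa [neg_add', -neg_add_rev, rpow_neg_one] using euler_product_steinhaus_general hf
    (fun p hp => (Finset.mem_filter.1 hp).2.1) (s := 1 / 2 + t * Complex.I) (by simp)
end
end
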